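/- Let u_ε be least energy solutions of the nearly critical Hartree equation and define λ_ε by λ_ε^{2(n−2)/(4−(n−2)ε)} = ‖u_ε‖_{L^∞(Ω)}. Then λ_ε → ∞ as ε → 0; that is, the least energy solutions become unbounded. -/

import Mathlib

open MeasureTheory Real Filter Topology Metric Bornology RealInnerProductSpace

noncomputable section

abbrev Eu (n : ℕ) := EuclideanSpace ℝ (Fin n)

/-- The Laplacian of a function `f : ℝⁿ → ℝ`. -/
noncomputable def lapl {n : ℕ} (f : Eu n → ℝ) (x : Eu n) : ℝ :=
  ∑ i : Fin n, fderiv ℝ (fun y => fderiv ℝ f y (EuclideanSpace.single i 1)) x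
    (EuclideanSpace.single i 1)

/-- Convolution with the kernel `|x|^(-k)`, integrating over the set `S`. -/
noncomputable def rzk {n : ℕ} (S : Set (Eu n)) (k : ℝ) (f : Eu n → ℝ) (x : Eu n) : ℝ :=
  ∫ z in S, f z / ‖x - z‖ ^ k

/-- Convolution with the Riesz kernel `|x|^(-(n-2))` over `S`. -/
noncomputable def rz {n : ℕ} (S : Set (Eu n)) (f : Eu n → ℝ) (x : Eu n) : ℝ :=
  rzk S ((n : ℝ) - 2) f x

/-- The critical exponent `p = (n+2)/(n-2)`. -/
noncomputable def pcrit (n : ℕ) : ℝ := ((n : ℝ) + 2) / ((n : ℝ) - 2)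

/-- `u` is a positive solution of the nearly critical Hartree equation
`-Δu = (|x|^{-(n-2)} ∗ u^{p-ε}) u^{p-1-ε}` in `Ω`, `u > 0` in `Ω`, `u = 0` on `∂Ω`
(extended by zero outside `Ω`). -/
def IsSol {n : ℕ} (Ω : Set (Eu n)) (ε : ℝ) (u : Eu n → ℝ) : Prop :=
  ContDiffOn ℝ 2 u Ω ∧ ContinuousOn u (closure Ω) ∧
  (∀ x ∈ Ω, - lapl u x =
      rz Ω (fun z => u z ^ (pcrit n - ε)) x * u x ^ (pcrit n - 1 - ε)) ∧
  (∀ x ∈ Ω, 0 < u x) ∧ (∀ x ∈ Ωᶜ, u x = 0)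

/-- The Hartree Rayleigh quotient with exponent `q`. -/
noncomputable def enRatio {n : ℕ} (Ω : Set (Eu n)) (q : ℝ) (u : Eu n → ℝ) : ℝ :=
  (∫ x in Ω, ‖gradient u x‖ ^ 2) /
    (∫ x in Ω, rz Ω (fun z => |u z| ^ q) x * |u x| ^ q) ^ (1 / q)

/-- The best constant in the Hardy–Littlewood–Sobolev–Sobolev inequality
`C_HLS (∫∫ |u|^p |u|^p / |x-z|^{n-2})^{1/p} ≤ ∫ |∇u|²`. -/
noncomputable def CHLS (n : ℕ) : ℝ :=
  sInf { c : ℝ | ∃ u : Eu n → ℝ, ContDiff ℝ (⊤ : ℕ∞) u ∧ HasCompactSupport u ∧ u ≠ 0 ∧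
    c = (∫ x, ‖gradient u x‖ ^ 2) /
      (∫ x, rz Set.univ (fun z => |u z| ^ pcrit n) x * |u x| ^ pcrit n) ^ (1 / pcrit n) }

/-- The sup norm of `u` over the closure of `Ω`. -/
noncomputable def supN {n : ℕ} (Ω : Set (Eu n)) (u : Eu n → ℝ) : ℝ :=
  sSup ((fun x => |u x|) '' closure Ω)

/-- The area of the unit sphere in `ℝⁿ`. -/
noncomputable def ωn (n : ℕ) : ℝ := 2 * π ^ ((n : ℝ) / 2) / Real.Gamma ((n : ℝ) / 2)

/-- A family of least energy solutions of the nearly critical Hartree equation. -/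
def LeastEnergyFamily {n : ℕ} (Ω : Set (Eu n)) (ε₀ : ℝ) (u : ℝ → Eu n → ℝ) : Prop :=
  (∀ ε ∈ Set.Ioo (0:ℝ) ε₀, IsSol Ω ε (u ε)) ∧
  Tendsto (fun ε => enRatio Ω (pcrit n - ε) (u ε)) (𝓝[>] (0:ℝ)) (𝓝 (CHLS n))

/-- The best Sobolev constant in `ℝⁿ`. -/
noncomputable def Sbest (n : ℕ) : ℝ :=
  sInf { c : ℝ | ∃ u : Eu n → ℝ, ContDiff ℝ (⊤ : ℕ∞) u ∧ HasCompactSupport u ∧ u ≠ 0 ∧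
    c = (∫ x, ‖gradient u x‖ ^ 2) /
      (∫ x, |u x| ^ (2 * (n : ℝ) / ((n : ℝ) - 2))) ^ (((n : ℝ) - 2) / (n : ℝ)) }

/-- The explicit constant `α̃_n` of Theorem 1.2. -/
noncomputable def alphaTilde (n : ℕ) : ℝ :=
  ((n : ℝ) * ((n : ℝ) - 2) / Real.sqrt (Sbest n)) ^ (((n : ℝ) - 2) / 4) *
    (π ^ ((n : ℝ) / 2) * Real.Gamma 1 / Real.Gamma (((n : ℝ) + 2) / 2)) *
    (Real.Gamma 1 * π ^ (((n : ℝ) - 2) / 2) / Real.Gamma (((n : ℝ) + 2) / 2) *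
        (Real.Gamma (n : ℝ) / Real.Gamma ((n : ℝ) / 2)) ^ ((2 : ℝ) / (n : ℝ))) ^
      ((2 - (n : ℝ)) / 8)

/-- The sharp HLS constant `C_{n,μ}`. -/
noncomputable def Cnmu (n : ℕ) (μ : ℝ) : ℝ :=
  Real.Gamma (((n : ℝ) - μ) / 2) * π ^ (μ / 2) / Real.Gamma ((n : ℝ) - μ / 2) *
    (Real.Gamma (n : ℝ) / Real.Gamma ((n : ℝ) / 2)) ^ (1 - μ / (n : ℝ))

/-- The bubble normalisation constant `c̃_{n,μ}`. -/
noncomputable def ctilde (n : ℕ) (μ : ℝ) : ℝ :=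
  ((n : ℝ) * ((n : ℝ) - 2)) ^ (((n : ℝ) - 2) / 4) *
    Sbest n ^ ((((n : ℝ) - μ) * (2 - (n : ℝ))) / (4 * ((n : ℝ) - μ + 2))) *
    Cnmu n μ ^ ((2 - (n : ℝ)) / (2 * ((n : ℝ) - μ + 2)))

/-- The standard bubble `W[ξ,λ]`. -/
noncomputable def Wb (n : ℕ) (μ : ℝ) (ξ : Eu n) (l : ℝ) (x : Eu n) : ℝ :=
  ctilde n μ * (l / (1 + l ^ 2 * ‖x - ξ‖ ^ 2)) ^ (((n : ℝ) - 2) / 2)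

/-- The standard bubble `W = W[0,1]` with `μ = n-2`. -/
noncomputable def W0 (n : ℕ) : Eu n → ℝ := Wb n ((n : ℝ) - 2) 0 1

/-- `C^{1,α}`-type norm of `f` on a set `s`. -/
noncomputable def c1aNorm {n : ℕ} (a : ℝ) (s : Set (Eu n)) (f : Eu n → ℝ) : ℝ :=
  (⨆ x ∈ s, |f x|) + (⨆ x ∈ s, ‖gradient f x‖) +
    ⨆ x ∈ s, ⨆ y ∈ s, ‖gradient f x - gradient f y‖ / ‖x - y‖ ^ a

/-! If the solutions stayed bounded by `M` along a sequence `ε → 0`, the best constant would be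
attained in the limit, and this is refuted without extracting a limit. By Green's identity the
Dirichlet and Hartree energies of `u_ε` are equal, so the least-energy condition forces their common
value `D_ε` to converge to `D = C_HLS^{p/(p-1)}`, and a maximum principle bounds `D_ε` from below,
whence `D > 0`. Raising `u_ε` by a constant `t` on a ball containing `Ω`, at the expense of a cutoff
far outside, costs only `O(t²)` of Dirichlet energy, whereas `u_ε + t ≥ (1 + t/M) u_ε` raises the
Hartree energy to first order in `t`. In the limit the defining inequality of `C_HLS` becomes
`(1 + t/M)² D ≤ D + C t²` for all `t > 0`, which fails for small `t`. -/

section RieszPotential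

variable {n : ℕ} {k m r d : ℝ} {S T : Set (Eu n)} {f h : Eu n → ℝ} {x : Eu n}

/-- The mass `∫_{|y| < r} |y|^{-k} dy` of the Riesz kernel on a ball; it controls the singular part
of a Riesz potential uniformly in the base point. -/
def rieszMass (n : ℕ) (k r : ℝ) : ℝ := ∫ y in ball (0 : Eu n) r, 1 / ‖y‖ ^ k

/-- The Riesz energy `∬_{S × S} f(x) f(z) / |x - z|^k dx dz`. -/
def rieszForm (S : Set (Eu n)) (k : ℝ) (f : Eu n → ℝ) : ℝ := ∫ x in S, rzk S k f x * f x

lemma measurable_one_div_norm_rpow : Measurable fun y : Eu n => 1 / ‖y‖ ^ k := by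
  fun_prop

lemma integrableOn_ball_one_div_norm_rpow (hk₀ : 0 ≤ k) (hk : k < n) (r : ℝ) :
    IntegrableOn (fun y : Eu n => 1 / ‖y‖ ^ k) (ball 0 r) := by
  have hn : 1 ≤ n := by exact_mod_cast hk₀.trans_lt hk
  refine integrableOn_ball_of_norm_le_rpow (C := 1) (α := k) (by simpa using hn) (by simpa using hk)
    (Eventually.of_forall fun y => ?_) measurable_one_div_norm_rpow.aestronglyMeasurable
  rw [rpow_neg (norm_nonneg y), one_mul, one_div, norm_of_nonneg (by positivity)]

lemma rieszMass_nonneg : 0 ≤ rieszMass n k r :=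
  integral_nonneg fun _ => by positivity

lemma tendsto_rieszMass_nhdsGT_zero (hk₀ : 0 ≤ k) (hk : k < n) :
    Tendsto (rieszMass n k) (𝓝[>] 0) (𝓝 0) := by
  have hn : n ≠ 0 := by
    rintro rfl
    exact absurd hk (by simpa using hk₀)
  have hvol : Tendsto (fun r => volume (ball (0 : Eu n) r)) (𝓝[>] 0) (𝓝 0) := by
    have := Fin.pos_iff_nonempty.1 (Nat.pos_of_ne_zero hn)
    simp only [EuclideanSpace.volume_ball]
    have hpow : Tendsto (fun r : ℝ => ENNReal.ofReal r ^ n) (𝓝[>] 0) (𝓝 0) := by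
      have hcont : Continuous fun r : ℝ => ENNReal.ofReal r ^ n :=
        (ENNReal.continuous_pow n).comp ENNReal.continuous_ofReal
      simpa [hn] using (hcont.tendsto 0).mono_left nhdsWithin_le_nhds
    simpa using ENNReal.Tendsto.mul_const hpow (Or.inr ENNReal.ofReal_ne_top)
  have hint := integrableOn_ball_one_div_norm_rpow (n := n) hk₀ hk 1
  have hsmall : (fun r => ∫ y in ball (0 : Eu n) r, 1 / ‖y‖ ^ k ∂volume.restrict (ball 0 1))
      =ᶠ[𝓝[>] 0] rieszMass n k := by
    filter_upwards [Ioo_mem_nhdsGT one_pos] with r hr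
    rw [rieszMass, Measure.restrict_restrict_of_subset (ball_subset_ball hr.2.le)]
  refine Tendsto.congr' hsmall (hint.tendsto_setIntegral_nhds_zero ?_)
  exact tendsto_of_tendsto_of_tendsto_of_le_of_le tendsto_const_nhds hvol (fun _ => zero_le)
    fun r => Measure.restrict_apply_le _ _

lemma rzk_nonneg (hS : MeasurableSet S) (hf : ∀ z ∈ S, 0 ≤ f z) : 0 ≤ rzk S k f x :=
  setIntegral_nonneg hS fun z hz => div_nonneg (hf z hz) (by positivity)

lemma rieszForm_nonneg (hS : MeasurableSet S) (hf : ∀ z ∈ S, 0 ≤ f z) : 0 ≤ rieszForm S k f :=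
  setIntegral_nonneg hS fun x hx => mul_nonneg (rzk_nonneg hS hf) (hf x hx)

lemma rieszForm_const_mul (a : ℝ) : rieszForm S k (fun z => a * f z) = a ^ 2 * rieszForm S k f := by
  simp only [rieszForm, rzk, mul_div_assoc, integral_const_mul, ← mul_assoc]
  rw [← integral_const_mul]
  congr with x
  ring

/-- The kernel is integrated against `m` where `‖x - z‖ < r` and is at most `r⁻ᵏ` elsewhere; this is
the resulting majorant of `f z / ‖x - z‖ ^ k`. -/
def rieszMajorant (k m r : ℝ) (f : Eu n → ℝ) (x z : Eu n) : ℝ :=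
  m * (ball 0 r).indicator (fun y => 1 / ‖y‖ ^ k) (x - z) + f z / r ^ k

lemma div_norm_sub_rpow_le_rieszMajorant (hk₀ : 0 ≤ k) (hr : 0 < r) {z : Eu n} (hf₀ : 0 ≤ f z)
    (hfm : f z ≤ m) : f z / ‖x - z‖ ^ k ≤ rieszMajorant k m r f x z := by
  by_cases hz : x - z ∈ ball (0 : Eu n) r
  · rw [rieszMajorant, Set.indicator_of_mem hz, mul_one_div]
    have : 0 ≤ f z / r ^ k := by positivity
    have : f z / ‖x - z‖ ^ k ≤ m / ‖x - z‖ ^ k := by gcongr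
    linarith
  · rw [rieszMajorant, Set.indicator_of_notMem hz, mul_zero, zero_add]
    have : r ≤ ‖x - z‖ := by simpa using hz
    gcongr

lemma integrable_indicator_ball_sub (hk₀ : 0 ≤ k) (hk : k < n) (x : Eu n) :
    Integrable fun z => (ball (0 : Eu n) r).indicator (fun y => 1 / ‖y‖ ^ k) (x - z) :=
  ((integrable_indicator_iff measurableSet_ball).2
    (integrableOn_ball_one_div_norm_rpow hk₀ hk r)).comp_sub_left x

lemma integrableOn_rieszMajorant (hk₀ : 0 ≤ k) (hk : k < n) (hf : IntegrableOn f S) :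
    IntegrableOn (rieszMajorant k m r f x) S :=
  ((integrable_indicator_ball_sub hk₀ hk x).integrableOn.const_mul m).add (hf.div_const _)

lemma setIntegral_rieszMajorant_le (hk₀ : 0 ≤ k) (hk : k < n) (hm : 0 ≤ m)
    (hf : IntegrableOn f S) :
    ∫ z in S, rieszMajorant k m r f x z ≤ m * rieszMass n k r + (∫ z in S, f z) / r ^ k := by
  have hker := integrable_indicator_ball_sub (r := r) hk₀ hk x
  have hmass : ∫ z in S, (ball (0 : Eu n) r).indicator (fun y => 1 / ‖y‖ ^ k) (x - z)
      ≤ rieszMass n k r := by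
    refine (setIntegral_le_integral hker (Eventually.of_forall fun z =>
      Set.indicator_nonneg (fun _ _ => by positivity) _)).trans_eq ?_
    rw [integral_sub_left_eq_self, integral_indicator measurableSet_ball, rieszMass]
  simp only [rieszMajorant]
  rw [integral_add (hker.integrableOn.const_mul m) (hf.div_const _), integral_const_mul,
    integral_div]
  gcongr

lemma integrableOn_div_norm_sub_rpow (hk₀ : 0 ≤ k) (hk : k < n) (hS : MeasurableSet S)
    (hf : IntegrableOn f S) (hf₀ : ∀ z ∈ S, 0 ≤ f z) (hfm : ∀ z ∈ S, f z ≤ m) (x : Eu n) :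
    IntegrableOn (fun z => f z / ‖x - z‖ ^ k) S := by
  refine (integrableOn_rieszMajorant (m := m) (r := 1) (x := x) hk₀ hk hf).mono' ?_
    (ae_restrict_of_forall_mem hS fun z hz => ?_)
  · have hker : Measurable fun z => ‖x - z‖ ^ k := by fun_prop
    exact hf.aestronglyMeasurable.div₀ hker.aestronglyMeasurable
  · rw [norm_of_nonneg (div_nonneg (hf₀ z hz) (by positivity))]
    exact div_norm_sub_rpow_le_rieszMajorant hk₀ one_pos (hf₀ z hz) (hfm z hz)

lemma rzk_le_mul_rieszMass_add (hk₀ : 0 ≤ k) (hk : k < n) (hS : MeasurableSet S)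
    (hm : 0 ≤ m) (hf : IntegrableOn f S) (hf₀ : ∀ z ∈ S, 0 ≤ f z) (hfm : ∀ z ∈ S, f z ≤ m)
    (hr : 0 < r) (x : Eu n) :
    rzk S k f x ≤ m * rieszMass n k r + (∫ z in S, f z) / r ^ k := by
  refine le_trans (setIntegral_mono_on (integrableOn_div_norm_sub_rpow hk₀ hk hS hf hf₀ hfm x)
    (integrableOn_rieszMajorant (x := x) hk₀ hk hf) hS fun z hz => ?_)
    (setIntegral_rieszMajorant_le hk₀ hk hm hf)
  exact div_norm_sub_rpow_le_rieszMajorant hk₀ hr (hf₀ z hz) (hfm z hz)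

lemma setIntegral_div_rpow_le_rzk (hk₀ : 0 ≤ k) (hk : k < n) (hS : MeasurableSet S)
    (hf : IntegrableOn f S) (hf₀ : ∀ z ∈ S, 0 ≤ f z) (hfm : ∀ z ∈ S, f z ≤ m)
    (hd : ∀ z ∈ S, ‖x - z‖ ≤ d) : (∫ z in S, f z) / d ^ k ≤ rzk S k f x := by
  have hn : 0 < n := by exact_mod_cast hk₀.trans_lt hk
  have := Fin.pos_iff_nonempty.1 hn
  rw [← integral_div]
  refine setIntegral_mono_on_ae (hf.div_const _)
    (integrableOn_div_norm_sub_rpow hk₀ hk hS hf hf₀ hfm x) hS ?_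
  filter_upwards [Measure.ae_ne volume x] with z hzx hzS
  have hpos : 0 < ‖x - z‖ := norm_sub_pos_iff.2 hzx.symm
  have := hd z hzS
  have := hf₀ z hzS
  gcongr

lemma aestronglyMeasurable_rzk (hf : IntegrableOn f S) :
    AEStronglyMeasurable (rzk S k f) (volume.restrict S) := by
  have hker : Measurable fun y : Eu n × Eu n => ‖y.1 - y.2‖ ^ k := by fun_prop
  exact (hf.aestronglyMeasurable.comp_snd.div₀
    hker.aestronglyMeasurable).integral_prod_right'

lemma integrableOn_rzk_mul (hk₀ : 0 ≤ k) (hk : k < n) (hS : MeasurableSet S)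
    (hf : IntegrableOn f S) (hf₀ : ∀ z ∈ S, 0 ≤ f z) (hfm : ∀ z ∈ S, f z ≤ m)
    (hh : IntegrableOn h S) : IntegrableOn (fun x => rzk S k f x * h x) S := by
  have hfm' : ∀ z ∈ S, f z ≤ max m 0 := fun z hz => (hfm z hz).trans (le_max_left _ _)
  refine hh.bdd_mul (c := max m 0 * rieszMass n k 1 + (∫ z in S, f z) / 1 ^ k)
    (aestronglyMeasurable_rzk hf) (Eventually.of_forall fun x => ?_)
  rw [norm_of_nonneg (rzk_nonneg hS hf₀)]
  exact rzk_le_mul_rieszMass_add hk₀ hk hS (le_max_right _ _) hf hf₀ hfm' one_pos x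

lemma sq_setIntegral_div_rpow_le_rieszForm (hk₀ : 0 ≤ k) (hk : k < n) (hS : MeasurableSet S)
    (hf : IntegrableOn f S) (hf₀ : ∀ z ∈ S, 0 ≤ f z) (hfm : ∀ z ∈ S, f z ≤ m)
    (hd : ∀ x ∈ S, ∀ z ∈ S, ‖x - z‖ ≤ d) : (∫ z in S, f z) ^ 2 / d ^ k ≤ rieszForm S k f := by
  rw [sq, mul_div_right_comm, ← integral_const_mul]
  refine setIntegral_mono_on (hf.const_mul _) (integrableOn_rzk_mul hk₀ hk hS hf hf₀ hfm hf) hS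
    fun x hx => ?_
  exact mul_le_mul_of_nonneg_right
    (setIntegral_div_rpow_le_rzk hk₀ hk hS hf hf₀ hfm (hd x hx)) (hf₀ x hx)

lemma rzk_mono (hk₀ : 0 ≤ k) (hk : k < n) (hS : MeasurableSet S) (hT : MeasurableSet T)
    (hST : S ⊆ T) (hf : IntegrableOn f T) (hf₀ : ∀ z ∈ T, 0 ≤ f z) (hfm : ∀ z ∈ T, f z ≤ m)
    (hh₀ : ∀ z ∈ S, 0 ≤ h z) (hhf : ∀ z ∈ S, h z ≤ f z) (x : Eu n) :
    rzk S k h x ≤ rzk T k f x := by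
  have hint := integrableOn_div_norm_sub_rpow hk₀ hk hT hf hf₀ hfm x
  calc rzk S k h x ≤ rzk S k f x :=
        integral_mono_of_nonneg
          (ae_restrict_of_forall_mem hS fun z hz => div_nonneg (hh₀ z hz) (by positivity))
          (hint.mono_set hST)
          (ae_restrict_of_forall_mem hS fun z hz => by have := hhf z hz; dsimp only; gcongr)
    _ ≤ rzk T k f x :=
        setIntegral_mono_set hint
          (ae_restrict_of_forall_mem hT fun z hz => div_nonneg (hf₀ z hz) (by positivity))
          (Eventually.of_forall hST)

lemma rieszForm_mono (hk₀ : 0 ≤ k) (hk : k < n) (hS : MeasurableSet S) (hT : MeasurableSet T)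
    (hST : S ⊆ T) (hf : IntegrableOn f T) (hf₀ : ∀ z ∈ T, 0 ≤ f z) (hfm : ∀ z ∈ T, f z ≤ m)
    (hh₀ : ∀ z ∈ S, 0 ≤ h z) (hhf : ∀ z ∈ S, h z ≤ f z) : rieszForm S k h ≤ rieszForm T k f := by
  have hint := integrableOn_rzk_mul hk₀ hk hT hf hf₀ hfm hf
  calc rieszForm S k h ≤ ∫ x in S, rzk T k f x * f x :=
        integral_mono_of_nonneg
          (ae_restrict_of_forall_mem hS fun x hx => mul_nonneg (rzk_nonneg hS hh₀) (hh₀ x hx))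
          (hint.mono_set hST)
          (ae_restrict_of_forall_mem hS fun x hx => mul_le_mul
            (rzk_mono hk₀ hk hS hT hST hf hf₀ hfm hh₀ hhf x) (hhf x hx) (hh₀ x hx)
            (rzk_nonneg hT hf₀))
    _ ≤ rieszForm T k f :=
        setIntegral_mono_set hint
          (ae_restrict_of_forall_mem hT fun x hx => mul_nonneg (rzk_nonneg hT hf₀) (hf₀ x hx))
          (Eventually.of_forall hST)

end RieszPotential

section MaximumPrinciple

variable {n : ℕ} {Ω : Set (Eu n)} {u f : Eu n → ℝ} {x : Eu n} {R F : ℝ}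

/-- The partial derivative `∂f/∂xᵢ` in the `i`-th coordinate direction. -/
def partialDeriv (i : Fin n) (f : Eu n → ℝ) (x : Eu n) : ℝ :=
  fderiv ℝ f x (EuclideanSpace.single i 1)

lemma lapl_eq_sum_partialDeriv (f : Eu n → ℝ) (x : Eu n) :
    lapl f x = ∑ i, partialDeriv i (partialDeriv i f) x := rfl

lemma contDiffAt_partialDeriv (hf : ContDiffAt ℝ 2 f x) (i : Fin n) :
    ContDiffAt ℝ 1 (partialDeriv i f) x :=
  (hf.fderiv_right (m := 1) (by norm_num)).clm_apply contDiffAt_const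

lemma deriv_deriv_nonpos_of_isLocalMax {g : ℝ → ℝ} {a : ℝ} (hg : ContinuousAt g a)
    (hmax : IsLocalMax g a) : deriv (deriv g) a ≤ 0 := by
  by_contra! hpos
  have hmin : IsLocalMin g a := isLocalMin_of_deriv_deriv_pos hpos hmax.deriv_eq_zero hg
  have hconst : g =ᶠ[𝓝 a] fun _ => g a := by
    filter_upwards [hmax, hmin] with t h₁ h₂ using le_antisymm h₁ h₂
  simp [hconst.deriv.deriv_eq] at hpos

lemma hasDerivAt_comp_add_smul_single (i : Fin n) {t : ℝ}
    (hf : DifferentiableAt ℝ f (x + t • EuclideanSpace.single i 1)) :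
    HasDerivAt (fun t : ℝ => f (x + t • EuclideanSpace.single i 1))
      (partialDeriv i f (x + t • EuclideanSpace.single i 1)) t := by
  have hline : HasDerivAt (fun t : ℝ => x + t • EuclideanSpace.single i (1 : ℝ))
      (EuclideanSpace.single i 1) t := by
    simpa using ((hasDerivAt_id t).smul_const (EuclideanSpace.single i (1 : ℝ))).const_add x
  exact hf.hasFDerivAt.comp_hasDerivAt t hline

lemma deriv_deriv_comp_add_smul_single (hf : ContDiffAt ℝ 2 f x) (i : Fin n) :
    deriv (deriv fun t : ℝ => f (x + t • EuclideanSpace.single i 1)) 0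
      = partialDeriv i (partialDeriv i f) x := by
  have hline : Tendsto (fun t : ℝ => x + t • EuclideanSpace.single i (1 : ℝ)) (𝓝 0) (𝓝 x) :=
    Continuous.tendsto' (by fun_prop) 0 x (by simp)
  have hfirst : deriv (fun t : ℝ => f (x + t • EuclideanSpace.single i 1))
      =ᶠ[𝓝 0] fun t => partialDeriv i f (x + t • EuclideanSpace.single i 1) := by
    filter_upwards [hline.eventually (hf.eventually (by simp))] with t ht
    exact (hasDerivAt_comp_add_smul_single i (ht.differentiableAt (by norm_num))).deriv
  have hsecond := hasDerivAt_comp_add_smul_single (f := partialDeriv i f) (x := x) (t := 0) i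
    (by simpa using (contDiffAt_partialDeriv hf i).differentiableAt (by norm_num))
  simpa using hfirst.deriv_eq.trans hsecond.deriv

lemma lapl_nonpos_of_isLocalMax (hf : ContDiffAt ℝ 2 f x) (hmax : IsLocalMax f x) :
    lapl f x ≤ 0 := by
  refine Finset.sum_nonpos fun i _ => ?_
  have hline : ContinuousAt (fun t : ℝ => x + t • EuclideanSpace.single i (1 : ℝ)) 0 := by fun_prop
  have hcont : ContinuousAt (fun t : ℝ => f (x + t • EuclideanSpace.single i 1)) 0 :=
    ContinuousAt.comp (by simpa using hf.continuousAt) hline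
  have hmax' : IsLocalMax (fun t : ℝ => f (x + t • EuclideanSpace.single i 1)) 0 :=
    IsLocalMax.comp_continuous (f := f) (by simpa using hmax) hline
  exact (deriv_deriv_comp_add_smul_single hf i).symm.trans_le
    (deriv_deriv_nonpos_of_isLocalMax hcont hmax')

lemma partialDeriv_add_const_mul_norm_sq (hf : DifferentiableAt ℝ f x) (A : ℝ) (i : Fin n) :
    partialDeriv i (fun y => f y + A * ‖y‖ ^ 2) x = partialDeriv i f x + 2 * A * x i := by
  have hsq : HasFDerivAt (fun y : Eu n => A * ‖y‖ ^ 2) (A • 2 • innerSL ℝ x) x :=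
    (hasStrictFDerivAt_norm_sq x).hasFDerivAt.const_mul A
  have hinner : ⟪x, EuclideanSpace.single i 1⟫ = x i := by
    simp [EuclideanSpace.inner_single_right]
  rw [partialDeriv, (hf.hasFDerivAt.fun_add hsq).fderiv]
  simp only [partialDeriv, add_apply, smul_apply, coe_innerSL_apply, hinner, nsmul_eq_mul,
    Nat.cast_ofNat, smul_eq_mul]
  ring

lemma lapl_add_const_mul_norm_sq (hf : ContDiffAt ℝ 2 f x) (A : ℝ) :
    lapl (fun y => f y + A * ‖y‖ ^ 2) x = lapl f x + 2 * n * A := by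
  have hsummand (i : Fin n) : partialDeriv i (partialDeriv i fun y => f y + A * ‖y‖ ^ 2) x
      = partialDeriv i (partialDeriv i f) x + 2 * A := by
    have hfirst : partialDeriv i (fun y => f y + A * ‖y‖ ^ 2)
        =ᶠ[𝓝 x] fun y => partialDeriv i f y + 2 * A * y i := by
      filter_upwards [hf.eventually (by simp)] with y hy
      exact partialDeriv_add_const_mul_norm_sq (hy.differentiableAt (by norm_num)) A i
    have hcoord : HasFDerivAt (fun y : Eu n => 2 * A * y i)
        ((2 * A) • EuclideanSpace.proj (𝕜 := ℝ) i) x :=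
      (EuclideanSpace.proj (𝕜 := ℝ) i).hasFDerivAt.const_mul (2 * A)
    have hd := (contDiffAt_partialDeriv hf i).differentiableAt (by norm_num)
    rw [partialDeriv, hfirst.fderiv_eq, (hd.hasFDerivAt.fun_add hcoord).fderiv]
    simp [partialDeriv]
  simp only [lapl_eq_sum_partialDeriv, hsummand, Finset.sum_add_distrib, Finset.sum_const,
    Finset.card_univ, Fintype.card_fin, nsmul_eq_mul]
  ring

lemma le_mul_sq_of_neg_lapl_lt (hΩ : IsOpen Ω) (hΩR : Ω ⊆ ball 0 R) (hu : Continuous u)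
    (hu₀ : ∀ x ∉ Ω, u x = 0) (hu₂ : ContDiffOn ℝ 2 u Ω) {A : ℝ} (hA : 0 ≤ A)
    (hlapl : ∀ x ∈ Ω, -lapl u x < 2 * n * A) (hx : x ∈ Ω) : u x ≤ A * R ^ 2 := by
  obtain ⟨y, hyΩ, hy⟩ := (isBounded_ball.subset hΩR).isCompact_closure.exists_isMaxOn
    ⟨x, subset_closure hx⟩ (f := fun x => u x + A * ‖x‖ ^ 2) (by fun_prop)
  have hy_not_mem : y ∉ Ω := fun hyΩ' => by
    have hC2 : ContDiffAt ℝ 2 u y := hu₂.contDiffAt (hΩ.mem_nhds hyΩ')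
    have hloc : IsLocalMax (fun x => u x + A * ‖x‖ ^ 2) y :=
      hy.isLocalMax (mem_of_superset (hΩ.mem_nhds hyΩ') subset_closure)
    have hnonpos := lapl_nonpos_of_isLocalMax
      (hC2.add (contDiffAt_const.mul (contDiff_norm_sq ℝ).contDiffAt)) hloc
    rw [lapl_add_const_mul_norm_sq hC2] at hnonpos
    linarith [hlapl y hyΩ']
  have hyR : ‖y‖ ≤ R := by
    simpa using closure_ball_subset_closedBall (closure_mono hΩR hyΩ)
  calc u x ≤ u x + A * ‖x‖ ^ 2 := le_add_of_nonneg_right (by positivity)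
    _ ≤ u y + A * ‖y‖ ^ 2 := hy (subset_closure hx)
    _ = A * ‖y‖ ^ 2 := by rw [hu₀ y hy_not_mem, zero_add]
    _ ≤ A * R ^ 2 := by gcongr

lemma le_mul_sq_of_neg_lapl_le (hn : 0 < n) (hΩ : IsOpen Ω) (hΩR : Ω ⊆ ball 0 R)
    (hu : Continuous u) (hu₀ : ∀ x ∉ Ω, u x = 0) (hu₂ : ContDiffOn ℝ 2 u Ω) (hF : 0 ≤ F)
    (hlapl : ∀ x ∈ Ω, -lapl u x ≤ F) (hx : x ∈ Ω) : u x ≤ F / (2 * n) * R ^ 2 := by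
  have hlim : Tendsto (fun A => A * R ^ 2) (𝓝[>] (F / (2 * n))) (𝓝 (F / (2 * n) * R ^ 2)) :=
    (Continuous.tendsto (by fun_prop) _).mono_left nhdsWithin_le_nhds
  refine ge_of_tendsto hlim (eventually_mem_nhdsWithin.mono fun A hA => ?_)
  have hA₀ : 0 ≤ A := (by positivity : 0 ≤ F / (2 * n)).trans (le_of_lt hA)
  refine le_mul_sq_of_neg_lapl_lt hΩ hΩR hu hu₀ hu₂ hA₀ (fun x hx => (hlapl x hx).trans_lt ?_) hx
  rwa [Set.mem_Ioi, div_lt_iff₀' (by positivity)] at hA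

end MaximumPrinciple

section SoftThreshold

variable {δ s : ℝ}

/-- A smooth cutoff on `ℝ`, equal to `0` on `(-∞, δ]` and to `1` on `[2δ, ∞)`. -/
def thresholdCutoff (δ t : ℝ) : ℝ := smoothTransition (t / δ - 1)

/-- The smooth soft threshold: the primitive of `thresholdCutoff δ`. It vanishes on `[0, δ]` and
differs from the identity by at most `2δ` on `[0, ∞)`, so composing with it makes a function
vanishing on the boundary compactly supported. -/
def softThreshold (δ s : ℝ) : ℝ := ∫ t in (0 : ℝ)..s, thresholdCutoff δ t

lemma continuous_thresholdCutoff (δ : ℝ) : Continuous (thresholdCutoff δ) :=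
  smoothTransition.continuous.comp (by fun_prop)

lemma thresholdCutoff_nonneg (δ t : ℝ) : 0 ≤ thresholdCutoff δ t := smoothTransition.nonneg _

lemma thresholdCutoff_le_one (δ t : ℝ) : thresholdCutoff δ t ≤ 1 := smoothTransition.le_one _

lemma thresholdCutoff_eq_zero (hδ : 0 < δ) (hs : s ≤ δ) : thresholdCutoff δ s = 0 :=
  smoothTransition.zero_of_nonpos (sub_nonpos.2 ((div_le_one hδ).2 hs))

lemma thresholdCutoff_eq_one (hδ : 0 < δ) (hs : 2 * δ ≤ s) : thresholdCutoff δ s = 1 :=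
  smoothTransition.one_of_one_le (by linarith [(le_div_iff₀ hδ).2 hs])

lemma hasDerivAt_softThreshold (δ s : ℝ) :
    HasDerivAt (softThreshold δ) (thresholdCutoff δ s) s :=
  ((continuous_thresholdCutoff δ).integral_hasStrictDerivAt 0 s).hasDerivAt

lemma contDiff_softThreshold (δ : ℝ) : ContDiff ℝ 1 (softThreshold δ) := by
  have hderiv : deriv (softThreshold δ) = thresholdCutoff δ :=
    funext fun s => (hasDerivAt_softThreshold δ s).deriv
  exact contDiff_one_iff_deriv.2 ⟨fun s => (hasDerivAt_softThreshold δ s).differentiableAt,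
    hderiv ▸ continuous_thresholdCutoff δ⟩

lemma softThreshold_eq_zero (hδ : 0 < δ) (hs : s ≤ δ) : softThreshold δ s = 0 := by
  refine intervalIntegral.integral_zero_ae (Eventually.of_forall fun t ht => ?_)
  exact thresholdCutoff_eq_zero hδ (ht.2.trans (max_le hδ.le hs))

lemma softThreshold_nonneg (hs : 0 ≤ s) : 0 ≤ softThreshold δ s :=
  intervalIntegral.integral_nonneg hs fun _ _ => thresholdCutoff_nonneg _ _

lemma softThreshold_le_self (hs : 0 ≤ s) : softThreshold δ s ≤ s := by
  simpa [softThreshold] using intervalIntegral.integral_mono_on (μ := volume) hs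
    ((continuous_thresholdCutoff δ).intervalIntegrable 0 s)
    (intervalIntegrable_const (c := (1 : ℝ))) fun t _ => thresholdCutoff_le_one δ t

lemma sub_two_mul_le_softThreshold (hδ : 0 < δ) (hs : 0 ≤ s) :
    s - 2 * δ ≤ softThreshold δ s := by
  rcases le_total s (2 * δ) with h | h
  · linarith [softThreshold_nonneg (δ := δ) hs]
  · have hint := (continuous_thresholdCutoff δ).intervalIntegrable (μ := volume)
    have hsplit : softThreshold δ (2 * δ) + ∫ t in (2 * δ)..s, thresholdCutoff δ t
        = softThreshold δ s :=
      intervalIntegral.integral_add_adjacent_intervals (hint _ _) (hint _ _)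
    have htail : ∫ t in (2 * δ)..s, thresholdCutoff δ t = s - 2 * δ := by
      rw [intervalIntegral.integral_congr (g := fun _ => (1 : ℝ))]
      · simp
      · intro t ht
        rw [Set.uIcc_of_le h] at ht
        exact thresholdCutoff_eq_one hδ ht.1
    linarith [softThreshold_nonneg (δ := δ) (s := 2 * δ) (by positivity)]

lemma tendsto_softThreshold (hs : 0 ≤ s) :
    Tendsto (fun δ => softThreshold δ s) (𝓝[>] 0) (𝓝 s) := by
  have hlow : Tendsto (fun δ => s - 2 * δ) (𝓝[>] 0) (𝓝 s) :=
    (Continuous.tendsto' (by fun_prop) 0 s (by simp)).mono_left nhdsWithin_le_nhds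
  refine tendsto_of_tendsto_of_tendsto_of_le_of_le' hlow tendsto_const_nhds ?_
    (Eventually.of_forall fun δ => softThreshold_le_self hs)
  filter_upwards [eventually_mem_nhdsWithin] with δ hδ
  exact sub_two_mul_le_softThreshold hδ hs

lemma tendsto_thresholdCutoff (hs : 0 < s) :
    Tendsto (fun δ => thresholdCutoff δ s) (𝓝[>] 0) (𝓝 1) := by
  refine tendsto_const_nhds.congr' ?_
  filter_upwards [Ioc_mem_nhdsGT (half_pos hs)] with δ hδ
  exact (thresholdCutoff_eq_one hδ.1 (by linarith [hδ.2])).symm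

end SoftThreshold

section GreenIdentity

variable {n : ℕ} {Ω S : Set (Eu n)} {u w : Eu n → ℝ} {x : Eu n} {δ : ℝ}

/-- The Dirichlet energy `∫_S |∇u|²`. -/
def dirichletEnergy (S : Set (Eu n)) (u : Eu n → ℝ) : ℝ := ∫ x in S, ‖gradient u x‖ ^ 2

lemma dirichletEnergy_nonneg : 0 ≤ dirichletEnergy S u := integral_nonneg fun _ => by positivity

lemma norm_gradient (u : Eu n → ℝ) (x : Eu n) : ‖gradient u x‖ = ‖fderiv ℝ u x‖ := by
  simp [gradient]

lemma norm_gradient_sq_eq_sum (u : Eu n → ℝ) (x : Eu n) :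
    ‖gradient u x‖ ^ 2 = ∑ i, partialDeriv i u x ^ 2 := by
  rw [EuclideanSpace.norm_sq_eq]
  refine Finset.sum_congr rfl fun i _ => ?_
  have hcoord : ⟪gradient u x, EuclideanSpace.single i (1 : ℝ)⟫ = partialDeriv i u x := by
    simp [gradient, partialDeriv]
  rw [Real.norm_eq_abs, sq_abs, ← hcoord, EuclideanSpace.inner_single_right]
  simp

lemma integrable_partialDeriv (hw : ContDiff ℝ 1 w) (hw₀ : HasCompactSupport w) (i : Fin n) :
    Integrable (partialDeriv i w) :=
  ((hw.continuous_fderiv one_ne_zero).clm_apply continuous_const).integrable_of_hasCompactSupport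
    (hw₀.fderiv_apply ℝ _)

lemma integral_partialDeriv_eq_zero (hw : ContDiff ℝ 1 w) (hw₀ : HasCompactSupport w)
    (i : Fin n) : ∫ x, partialDeriv i w x = 0 := by
  have hint : Integrable (fun x => fderiv ℝ w x (EuclideanSpace.single i 1)) :=
    integrable_partialDeriv hw hw₀ i
  simpa [partialDeriv] using integral_mul_fderiv_eq_neg_fderiv_mul_of_integrable (𝕜 := ℝ)
    (μ := volume) (f := fun _ : Eu n => (1 : ℝ)) (g := w) (v := EuclideanSpace.single i 1)
    (by simp) (by simpa using hint)
    (by simpa using hw.continuous.integrable_of_hasCompactSupport hw₀)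
    (fun x _ => by fun_prop) (fun x _ => hw.differentiable one_ne_zero x)

lemma hasCompactSupport_of_eq_zero_notMem (hΩ : IsBounded Ω) (hw₀ : ∀ x ∉ Ω, w x = 0) :
    HasCompactSupport w :=
  HasCompactSupport.intro hΩ.isCompact_closure fun x hx => hw₀ x fun h => hx (subset_closure h)

lemma softThreshold_comp_eventuallyEq_zero (hδ : 0 < δ) (hu : Continuous u) (hx : u x = 0) :
    (fun y => softThreshold δ (u y)) =ᶠ[𝓝 x] fun _ => 0 := by
  filter_upwards [hu.continuousAt.eventually (gt_mem_nhds (hx.trans_lt hδ))] with y hy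
  exact softThreshold_eq_zero hδ hy.le

lemma contDiff_softThreshold_comp_mul (hδ : 0 < δ) (hΩ : IsOpen Ω) (hu : Continuous u)
    (hu₀ : ∀ x ∉ Ω, u x = 0) (hu₁ : ContDiffOn ℝ 1 u Ω) (hw : ∀ x ∈ Ω, ContDiffAt ℝ 1 w x) :
    ContDiff ℝ 1 fun x => softThreshold δ (u x) * w x := by
  rw [contDiff_iff_contDiffAt]
  intro x
  by_cases hx : x ∈ Ω
  · exact ((contDiff_softThreshold δ).contDiffAt.comp x
      (hu₁.contDiffAt (hΩ.mem_nhds hx))).mul (hw x hx)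
  · refine (contDiffAt_const (c := 0)).congr_of_eventuallyEq ?_
    filter_upwards [softThreshold_comp_eventuallyEq_zero hδ hu (hu₀ x hx)] with y hy
    rw [hy, zero_mul]

lemma hasFDerivAt_softThreshold_comp (hu : DifferentiableAt ℝ u x) :
    HasFDerivAt (fun y => softThreshold δ (u y)) (thresholdCutoff δ (u x) • fderiv ℝ u x) x :=
  (hasDerivAt_softThreshold δ (u x)).comp_hasFDerivAt x hu.hasFDerivAt

lemma partialDeriv_softThreshold_comp_mul (hu : DifferentiableAt ℝ u x)
    (hw : DifferentiableAt ℝ w x) (i : Fin n) :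
    partialDeriv i (fun y => softThreshold δ (u y) * w y) x
      = thresholdCutoff δ (u x) * (partialDeriv i u x * w x)
        + softThreshold δ (u x) * partialDeriv i w x := by
  rw [partialDeriv, ((hasFDerivAt_softThreshold_comp hu).fun_mul hw.hasFDerivAt).fderiv]
  simp only [add_apply, smul_apply, smul_eq_mul, partialDeriv]
  ring

lemma partialDeriv_softThreshold_comp_mul_eq_zero (hδ : 0 < δ) (hu : Continuous u)
    (hx : u x = 0) (i : Fin n) : partialDeriv i (fun y => softThreshold δ (u y) * w y) x = 0 := by
  have hzero : (fun y => softThreshold δ (u y) * w y) =ᶠ[𝓝 x] fun _ => 0 := by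
    filter_upwards [softThreshold_comp_eventuallyEq_zero hδ hu hx] with y hy
    rw [hy, zero_mul]
  simp [partialDeriv, hzero.fderiv_eq]

lemma sum_partialDeriv_softThreshold_comp_mul_partialDeriv (hu : ContDiffAt ℝ 2 u x) :
    ∑ i, partialDeriv i (fun y => softThreshold δ (u y) * partialDeriv i u y) x
      = thresholdCutoff δ (u x) * ‖gradient u x‖ ^ 2 + softThreshold δ (u x) * lapl u x := by
  have hterm (i : Fin n) := partialDeriv_softThreshold_comp_mul (δ := δ)
    (hu.differentiableAt (by norm_num))
    ((contDiffAt_partialDeriv hu i).differentiableAt (by norm_num)) i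
  simp only [hterm, Finset.sum_add_distrib, ← Finset.mul_sum, norm_gradient_sq_eq_sum,
    lapl_eq_sum_partialDeriv, ← sq]

lemma integrableOn_softThreshold_comp_mul_lapl (hΩ : IsOpen Ω) (hΩb : IsBounded Ω)
    (hu : Continuous u) (hu₀ : ∀ x ∉ Ω, u x = 0) (hpos : ∀ x ∈ Ω, 0 < u x)
    (hL : IntegrableOn (lapl u) Ω) (δ : ℝ) :
    IntegrableOn (fun x => softThreshold δ (u x) * lapl u x) Ω := by
  obtain ⟨M, hM⟩ :=
    hu.bounded_above_of_compact_support (hasCompactSupport_of_eq_zero_notMem hΩb hu₀)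
  refine hL.bdd_mul (c := M)
    ((contDiff_softThreshold δ).continuous.comp hu).aestronglyMeasurable
    (ae_restrict_of_forall_mem hΩ.measurableSet fun x hx => ?_)
  have hux := (hpos x hx).le
  rw [norm_of_nonneg (softThreshold_nonneg hux)]
  exact (softThreshold_le_self hux).trans ((le_norm_self _).trans (hM x))

variable (hΩ : IsOpen Ω) (hΩb : IsBounded Ω) (hu : Continuous u) (hu₀ : ∀ x ∉ Ω, u x = 0)
  (hu₂ : ContDiffOn ℝ 2 u Ω)
include hΩ hΩb hu hu₀ hu₂

lemma integrableOn_and_setIntegral_thresholdCutoff_add_eq_zero (hδ : 0 < δ) :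
    IntegrableOn (fun x => thresholdCutoff δ (u x) * ‖gradient u x‖ ^ 2
      + softThreshold δ (u x) * lapl u x) Ω ∧
    ∫ x in Ω, (thresholdCutoff δ (u x) * ‖gradient u x‖ ^ 2
      + softThreshold δ (u x) * lapl u x) = 0 := by
  set W : Fin n → Eu n → ℝ := fun i y => softThreshold δ (u y) * partialDeriv i u y with hW
  have hC2 (x) (hx : x ∈ Ω) : ContDiffAt ℝ 2 u x := hu₂.contDiffAt (hΩ.mem_nhds hx)
  have hW₁ (i) : ContDiff ℝ 1 (W i) := contDiff_softThreshold_comp_mul hδ hΩ hu hu₀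
    (hu₂.of_le (by norm_num)) fun x hx => contDiffAt_partialDeriv (hC2 x hx) i
  have hW₀ (i) : HasCompactSupport (W i) := hasCompactSupport_of_eq_zero_notMem hΩb fun x hx => by
    simp only [hW, hu₀ x hx, softThreshold_eq_zero hδ hδ.le, zero_mul]
  have hint : Integrable fun x => ∑ i, partialDeriv i (W i) x :=
    integrable_finsetSum _ fun i _ => integrable_partialDeriv (hW₁ i) (hW₀ i) i
  have hdiv : ∫ x in Ω, ∑ i, partialDeriv i (W i) x = 0 := by
    rw [setIntegral_eq_integral_of_forall_compl_eq_zero fun x hx => Finset.sum_eq_zero fun i _ =>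
      partialDeriv_softThreshold_comp_mul_eq_zero hδ hu (hu₀ x hx) i,
      integral_finsetSum _ fun i _ => integrable_partialDeriv (hW₁ i) (hW₀ i) i]
    exact Finset.sum_eq_zero fun i _ => integral_partialDeriv_eq_zero (hW₁ i) (hW₀ i) i
  have hsum : Set.EqOn (fun x => ∑ i, partialDeriv i (W i) x) _ Ω := fun x hx =>
    sum_partialDeriv_softThreshold_comp_mul_partialDeriv (hC2 x hx)
  exact ⟨hint.integrableOn.congr_fun hsum hΩ.measurableSet,
    (setIntegral_congr_fun hΩ.measurableSet hsum).symm.trans hdiv⟩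

variable (hpos : ∀ x ∈ Ω, 0 < u x) (hL : IntegrableOn (lapl u) Ω)
include hpos hL

lemma integrableOn_thresholdCutoff_comp_mul_norm_gradient_sq (hδ : 0 < δ) :
    IntegrableOn (fun x => thresholdCutoff δ (u x) * ‖gradient u x‖ ^ 2) Ω := by
  have hsum := (integrableOn_and_setIntegral_thresholdCutoff_add_eq_zero hΩ hΩb hu hu₀ hu₂ hδ).1
  exact (hsum.sub (integrableOn_softThreshold_comp_mul_lapl hΩ hΩb hu hu₀ hpos hL δ)).congr_fun
    (fun x _ => add_sub_cancel_right _ _) hΩ.measurableSet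

lemma setIntegral_thresholdCutoff_comp_mul_norm_gradient_sq (hδ : 0 < δ) :
    ∫ x in Ω, thresholdCutoff δ (u x) * ‖gradient u x‖ ^ 2
      = -∫ x in Ω, softThreshold δ (u x) * lapl u x := by
  rw [eq_neg_iff_add_eq_zero, ← integral_add
    (integrableOn_thresholdCutoff_comp_mul_norm_gradient_sq hΩ hΩb hu hu₀ hu₂ hpos hL hδ)
    (integrableOn_softThreshold_comp_mul_lapl hΩ hΩb hu hu₀ hpos hL δ)]
  exact (integrableOn_and_setIntegral_thresholdCutoff_add_eq_zero hΩ hΩb hu hu₀ hu₂ hδ).2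

lemma tendsto_setIntegral_thresholdCutoff_comp_mul_norm_gradient_sq :
    Tendsto (fun δ => ∫ x in Ω, thresholdCutoff δ (u x) * ‖gradient u x‖ ^ 2) (𝓝[>] 0)
      (𝓝 (-∫ x in Ω, u x * lapl u x)) := by
  obtain ⟨M, hM⟩ :=
    hu.bounded_above_of_compact_support (hasCompactSupport_of_eq_zero_notMem hΩb hu₀)
  have hdom : Tendsto (fun δ => ∫ x in Ω, softThreshold δ (u x) * lapl u x) (𝓝[>] 0)
      (𝓝 (∫ x in Ω, u x * lapl u x)) := by
    refine tendsto_integral_filter_of_dominated_convergence (fun x => M * ‖lapl u x‖)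
      (Eventually.of_forall fun δ => (integrableOn_softThreshold_comp_mul_lapl hΩ hΩb hu hu₀
        hpos hL δ).aestronglyMeasurable)
      (Eventually.of_forall fun δ => ae_restrict_of_forall_mem hΩ.measurableSet fun x hx => ?_)
      (hL.norm.const_mul M)
      (ae_restrict_of_forall_mem hΩ.measurableSet fun x hx =>
        (tendsto_softThreshold (hpos x hx).le).mul_const _)
    have hux := (hpos x hx).le
    rw [norm_mul, norm_of_nonneg (softThreshold_nonneg hux)]
    gcongr
    exact (softThreshold_le_self hux).trans ((le_norm_self _).trans (hM x))
  refine hdom.neg.congr' (eventually_mem_nhdsWithin.mono fun δ hδ => ?_)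
  exact (setIntegral_thresholdCutoff_comp_mul_norm_gradient_sq hΩ hΩb hu hu₀ hu₂ hpos hL hδ).symm

lemma integrableOn_norm_gradient_sq : IntegrableOn (fun x => ‖gradient u x‖ ^ 2) Ω := by
  obtain ⟨d, -, hd₀, hd⟩ := exists_seq_strictAnti_tendsto (0 : ℝ)
  have hmeas (j : ℕ) : MeasurableSet {x | 2 * d j ≤ u x} :=
    (isClosed_le continuous_const hu).measurableSet
  have hcover : AECover (volume.restrict Ω) atTop fun j => {x | 2 * d j ≤ u x} := by
    refine ⟨ae_restrict_of_forall_mem hΩ.measurableSet fun x hx => ?_, hmeas⟩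
    have hd₂ : Tendsto (fun j => 2 * d j) atTop (𝓝 0) := by simpa using hd.const_mul 2
    exact hd₂.eventually_le_const (hpos x hx)
  have hcutoff (j : ℕ) : Set.EqOn (fun x => thresholdCutoff (d j) (u x) * ‖gradient u x‖ ^ 2)
      (fun x => ‖gradient u x‖ ^ 2) {x | 2 * d j ≤ u x} := fun x hx => by
    simp only [thresholdCutoff_eq_one (hd₀ j) hx, one_mul]
  have hint (j : ℕ) := integrableOn_thresholdCutoff_comp_mul_norm_gradient_sq hΩ hΩb hu hu₀ hu₂
    hpos hL (hd₀ j)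
  have hlim := (tendsto_setIntegral_thresholdCutoff_comp_mul_norm_gradient_sq hΩ hΩb hu hu₀ hu₂
    hpos hL).comp (tendsto_nhdsWithin_iff.2 ⟨hd, Eventually.of_forall hd₀⟩)
  refine hcover.integrable_of_integral_bounded_of_nonneg_ae (-(∫ x in Ω, u x * lapl u x) + 1)
    (fun j => (hint j).integrableOn.congr_fun (hcutoff j) (hmeas j))
    (Eventually.of_forall fun x => by positivity) ?_
  filter_upwards [hlim.eventually_le_const (lt_add_one _)] with j hj
  rw [← setIntegral_congr_fun (hmeas j) (hcutoff j)]
  exact (setIntegral_le_integral (hint j) (Eventually.of_forall fun x =>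
    mul_nonneg (thresholdCutoff_nonneg _ _) (by positivity))).trans hj

theorem dirichletEnergy_eq_neg_setIntegral_mul_lapl :
    dirichletEnergy Ω u = -∫ x in Ω, u x * lapl u x := by
  have hgrad := integrableOn_norm_gradient_sq hΩ hΩb hu hu₀ hu₂ hpos hL
  refine tendsto_nhds_unique ?_
    (tendsto_setIntegral_thresholdCutoff_comp_mul_norm_gradient_sq hΩ hΩb hu hu₀ hu₂ hpos hL)
  refine tendsto_integral_filter_of_dominated_convergence (fun x => ‖gradient u x‖ ^ 2)
    (eventually_mem_nhdsWithin.mono fun δ hδ =>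
      (integrableOn_thresholdCutoff_comp_mul_norm_gradient_sq hΩ hΩb hu hu₀ hu₂ hpos hL
        hδ).aestronglyMeasurable)
    (Eventually.of_forall fun δ => Eventually.of_forall fun x => ?_) hgrad
    (ae_restrict_of_forall_mem hΩ.measurableSet fun x hx => ?_)
  · rw [Real.norm_of_nonneg (mul_nonneg (thresholdCutoff_nonneg _ _) (sq_nonneg _))]
    exact mul_le_of_le_one_left (by positivity) (thresholdCutoff_le_one _ _)
  · simpa using (tendsto_thresholdCutoff (hpos x hx)).mul_const (‖gradient u x‖ ^ 2)

lemma dirichletEnergy_softThreshold_comp_le (hδ : 0 < δ) :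
    dirichletEnergy Set.univ (fun x => softThreshold δ (u x)) ≤ dirichletEnergy Ω u := by
  have hzero (x) (hx : x ∉ Ω) : ‖gradient (fun y => softThreshold δ (u y)) x‖ ^ 2 = 0 := by
    simp [norm_gradient, (softThreshold_comp_eventuallyEq_zero hδ hu (hu₀ x hx)).fderiv_eq]
  rw [dirichletEnergy, setIntegral_univ, ← setIntegral_eq_integral_of_forall_compl_eq_zero hzero]
  refine integral_mono_of_nonneg (Eventually.of_forall fun x => by positivity)
    (integrableOn_norm_gradient_sq hΩ hΩb hu hu₀ hu₂ hpos hL)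
    (ae_restrict_of_forall_mem hΩ.measurableSet fun x hx => ?_)
  have hdiff : DifferentiableAt ℝ u x :=
    (hu₂.contDiffAt (hΩ.mem_nhds hx)).differentiableAt (by norm_num)
  simp only [norm_gradient, (hasFDerivAt_softThreshold_comp hdiff).fderiv, norm_smul]
  rw [norm_of_nonneg (thresholdCutoff_nonneg _ _)]
  exact pow_le_pow_left₀ (mul_nonneg (thresholdCutoff_nonneg _ _) (norm_nonneg _))
    (mul_le_of_le_one_left (norm_nonneg _) (thresholdCutoff_le_one _ _)) 2

end GreenIdentity

section TestFunctions

variable {n : ℕ} {S : Set (Eu n)} {v w : Eu n → ℝ} {R : ℝ}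

lemma integrable_norm_gradient_sq (hw : ContDiff ℝ 1 w) (hw₀ : HasCompactSupport w) :
    Integrable fun x => ‖gradient w x‖ ^ 2 := by
  have hcont : Continuous fun x => ‖fderiv ℝ w x‖ ^ 2 :=
    (hw.continuous_fderiv one_ne_zero).norm.pow 2
  have hsupp : HasCompactSupport fun x => ‖fderiv ℝ w x‖ ^ 2 :=
    (hw₀.fderiv ℝ).comp_left (g := fun L => ‖L‖ ^ 2) (by simp)
  simpa only [norm_gradient] using hcont.integrable_of_hasCompactSupport hsupp

lemma gradient_eq_zero_of_eq_zero_notMem_ball (hw : ∀ x ∉ ball (0 : Eu n) R, w x = 0)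
    {x : Eu n} (hx : x ∉ closedBall 0 R) : gradient w x = 0 := by
  have hzero : w =ᶠ[𝓝 x] fun _ => 0 := by
    filter_upwards [isClosed_closedBall.isOpen_compl.mem_nhds hx] with y hy
    exact hw y fun h => hy (ball_subset_closedBall h)
  simp [gradient, hzero.fderiv_eq]

lemma dirichletEnergy_const_mul (s : ℝ) (hw : Differentiable ℝ w) :
    dirichletEnergy S (fun x => s * w x) = s ^ 2 * dirichletEnergy S w := by
  have hgrad (x) : ‖gradient (fun y => s * w y) x‖ ^ 2 = s ^ 2 * ‖gradient w x‖ ^ 2 := by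
    rw [norm_gradient, norm_gradient, fderiv_const_mul (hw x), norm_smul, mul_pow,
      Real.norm_eq_abs, sq_abs]
  simp only [dirichletEnergy, hgrad, integral_const_mul]

lemma dirichletEnergy_add_of_gradient_eq_zero (hv : ContDiff ℝ 1 v) (hv₀ : HasCompactSupport v)
    (hw : ContDiff ℝ 1 w) (hw₀ : HasCompactSupport w)
    (hvw : ∀ x, gradient v x = 0 ∨ gradient w x = 0) :
    dirichletEnergy S (fun x => v x + w x) = dirichletEnergy S v + dirichletEnergy S w := by
  have hgrad (x) : gradient (fun x => v x + w x) x = gradient v x + gradient w x := by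
    simp only [gradient, fderiv_fun_add (hv.differentiable one_ne_zero x)
      (hw.differentiable one_ne_zero x), map_add]
  rw [dirichletEnergy, dirichletEnergy, dirichletEnergy,
    ← integral_add (integrable_norm_gradient_sq hv hv₀).integrableOn
      (integrable_norm_gradient_sq hw hw₀).integrableOn]
  congr 1 with x
  rcases hvw x with h | h <;> simp [hgrad, h]

open ContinuousLinearMap in
lemma exists_contDiff_abs_sub_le_norm_fderiv_sub_le (hw : ContDiff ℝ 1 w)
    (hw₀ : ∀ x ∉ ball (0 : Eu n) R, w x = 0) {η : ℝ} (hη : 0 < η) :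
    ∃ ψ : Eu n → ℝ, ContDiff ℝ (⊤ : ℕ∞) ψ ∧ (∀ x ∉ ball (0 : Eu n) (R + 1), ψ x = 0) ∧
      (∀ x, |ψ x - w x| ≤ η) ∧ ∀ x, ‖fderiv ℝ ψ x - fderiv ℝ w x‖ ≤ η := by
  have hwc := hw.continuous
  have hw'c : Continuous (fderiv ℝ w) := hw.continuous_fderiv one_ne_zero
  have hsupp : HasCompactSupport w := hasCompactSupport_of_eq_zero_notMem isBounded_ball hw₀
  obtain ⟨d₁, hd₁, hwd⟩ :=
    Metric.uniformContinuous_iff.1 (hsupp.uniformContinuous_of_continuous hwc) η hη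
  obtain ⟨d₂, hd₂, hwd'⟩ := Metric.uniformContinuous_iff.1
    ((hsupp.fderiv ℝ).uniformContinuous_of_continuous hw'c) η hη
  have hd : 0 < min (min d₁ d₂) 1 := by positivity
  let φ : ContDiffBump (0 : Eu n) := ⟨min (min d₁ d₂) 1 / 2, _, half_pos hd, half_lt_self hd⟩
  have hφ : LocallyIntegrable (φ.normed volume) volume := φ.continuous_normed.locallyIntegrable
  refine ⟨convolution (φ.normed volume) w (lsmul ℝ ℝ) volume,
    HasCompactSupport.contDiff_convolution_left _ φ.hasCompactSupport_normed φ.contDiff_normed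
      hwc.locallyIntegrable, fun x hx => ?_, fun x => ?_, fun x => ?_⟩
  · have hzero (y) (hy : dist y x < 1) : w y = 0 := hw₀ y fun h => hx <| by
      rw [mem_ball] at h ⊢
      linarith [dist_triangle_left x 0 y]
    rw [φ.normed_convolution_eq_right fun y hy => ?_, hzero x (by simp)]
    rw [hzero y (lt_of_lt_of_le hy (min_le_right _ _)), hzero x (by simp)]
  · exact φ.dist_normed_convolution_le hwc.aestronglyMeasurable fun y hy =>
      (hwd (lt_of_lt_of_le hy ((min_le_left _ _).trans (min_le_left _ _)))).le
  · have hconv : convolution (φ.normed volume) (fderiv ℝ w) ((lsmul ℝ ℝ).precompR (Eu n)) volume x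
        = convolution (φ.normed volume) (fderiv ℝ w) (lsmul ℝ ℝ) volume x :=
      integral_congr_ae (Eventually.of_forall fun y => by ext z; simp)
    rw [(hsupp.hasFDerivAt_convolution_right (lsmul ℝ ℝ) hφ hw x).fderiv, hconv, ← dist_eq_norm]
    exact φ.dist_normed_convolution_le hw'c.aestronglyMeasurable fun y hy =>
      (hwd' (lt_of_lt_of_le hy ((min_le_left _ _).trans (min_le_right _ _)))).le

lemma norm_gradient_sq_le_of_norm_fderiv_sub_le {x : Eu n} {η : ℝ}
    (hvw : ‖fderiv ℝ v x - fderiv ℝ w x‖ ≤ η) :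
    ‖gradient v x‖ ^ 2 ≤ ‖gradient w x‖ ^ 2 + 2 * η * ‖gradient w x‖ + η ^ 2 := by
  have hnorm : ‖gradient v x‖ ≤ ‖gradient w x‖ + η := by
    simp only [norm_gradient]
    linarith [norm_sub_norm_le (fderiv ℝ v x) (fderiv ℝ w x)]
  calc ‖gradient v x‖ ^ 2 ≤ (‖gradient w x‖ + η) ^ 2 := by gcongr
    _ = _ := by ring

lemma dirichletEnergy_le_of_norm_fderiv_sub_le (hw : ContDiff ℝ 1 w)
    (hw₀ : HasCompactSupport w) (hv₀ : ∀ x ∉ ball (0 : Eu n) R, v x = 0) {η : ℝ}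
    (hvw : ∀ x, ‖fderiv ℝ v x - fderiv ℝ w x‖ ≤ η) :
    dirichletEnergy Set.univ v ≤ dirichletEnergy Set.univ w
      + (2 * η * ∫ x, ‖gradient w x‖) + η ^ 2 * volume.real (closedBall (0 : Eu n) R) := by
  have hη : 0 ≤ η := (norm_nonneg _).trans (hvw 0)
  have hint₁ : Integrable fun x => ‖gradient w x‖ := by
    simp only [norm_gradient]
    exact ((hw.continuous_fderiv one_ne_zero).integrable_of_hasCompactSupport (hw₀.fderiv ℝ)).norm
  have hint₂ := integrable_norm_gradient_sq hw hw₀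
  have hint : Integrable fun x => ‖gradient w x‖ ^ 2 + 2 * η * ‖gradient w x‖ :=
    hint₂.add (hint₁.const_mul _)
  have hint₃ : IntegrableOn (fun _ => η ^ 2) (closedBall (0 : Eu n) R) :=
    integrableOn_const (isCompact_closedBall _ _).measure_lt_top.ne
  calc dirichletEnergy Set.univ v
      = ∫ x in closedBall 0 R, ‖gradient v x‖ ^ 2 := by
        rw [dirichletEnergy, setIntegral_univ,
          setIntegral_eq_integral_of_forall_compl_eq_zero fun x hx => by
            simp [gradient_eq_zero_of_eq_zero_notMem_ball hv₀ hx]]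
    _ ≤ ∫ x in closedBall 0 R, (‖gradient w x‖ ^ 2 + 2 * η * ‖gradient w x‖ + η ^ 2) :=
        integral_mono_of_nonneg (Eventually.of_forall fun x => by positivity)
          (Integrable.add hint.integrableOn hint₃)
          (Eventually.of_forall fun x => norm_gradient_sq_le_of_norm_fderiv_sub_le (hvw x))
    _ = (∫ x in closedBall 0 R, (‖gradient w x‖ ^ 2 + 2 * η * ‖gradient w x‖))
        + η ^ 2 * volume.real (closedBall (0 : Eu n) R) := by
        rw [integral_add hint.integrableOn hint₃, setIntegral_const,
          smul_eq_mul, mul_comm (volume.real _)]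
    _ ≤ (∫ x, (‖gradient w x‖ ^ 2 + 2 * η * ‖gradient w x‖))
        + η ^ 2 * volume.real (closedBall (0 : Eu n) R) := by
        gcongr ?_ + _
        exact setIntegral_le_integral hint
          (Eventually.of_forall fun x => by positivity)
    _ = _ := by
        rw [integral_add hint₂ (hint₁.const_mul _), integral_const_mul, dirichletEnergy,
          setIntegral_univ]

lemma exists_contDiff_abs_sub_le_dirichletEnergy_le (hw : ContDiff ℝ 1 w)
    (hw₀ : ∀ x ∉ ball (0 : Eu n) R, w x = 0) {η θ : ℝ} (hη : 0 < η) (hθ : 0 < θ) :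
    ∃ ψ : Eu n → ℝ, ContDiff ℝ (⊤ : ℕ∞) ψ ∧ (∀ x ∉ ball (0 : Eu n) (R + 1), ψ x = 0) ∧
      (∀ x, |ψ x - w x| ≤ η) ∧
      dirichletEnergy Set.univ ψ ≤ dirichletEnergy Set.univ w + θ := by
  have hlim : Tendsto (fun s => (2 * s * ∫ x, ‖gradient w x‖)
      + s ^ 2 * volume.real (closedBall (0 : Eu n) (R + 1))) (𝓝[>] 0) (𝓝 0) :=
    (Continuous.tendsto' (by fun_prop) 0 0 (by simp)).mono_left nhdsWithin_le_nhds
  obtain ⟨s, hsθ, hs₀, hsη⟩ :=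
    ((hlim.eventually_le_const hθ).and (Ioc_mem_nhdsGT hη)).exists
  obtain ⟨ψ, hψ, hψ₀, hψw, hψw'⟩ := exists_contDiff_abs_sub_le_norm_fderiv_sub_le hw hw₀ hs₀
  refine ⟨ψ, hψ, hψ₀, fun x => (hψw x).trans hsη, ?_⟩
  linarith [dirichletEnergy_le_of_norm_fderiv_sub_le hw
    (hasCompactSupport_of_eq_zero_notMem isBounded_ball hw₀) hψ₀ hψw']

lemma exists_plateau (hR : 0 < R) : ∃ φ : Eu n → ℝ, ContDiff ℝ (⊤ : ℕ∞) φ ∧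
    HasCompactSupport φ ∧ (∀ x ∈ closedBall 0 R, φ x = 1) ∧
    ∀ x ∈ ball 0 R, gradient φ x = 0 := by
  let φ : ContDiffBump (0 : Eu n) := ⟨R, R + 1, hR, lt_add_one R⟩
  refine ⟨φ, φ.contDiff, φ.hasCompactSupport, fun x hx => φ.one_of_mem_closedBall hx,
    fun x hx => ?_⟩
  have hone : (φ : Eu n → ℝ) =ᶠ[𝓝 x] fun _ => 1 := by
    filter_upwards [isOpen_ball.mem_nhds hx] with y hy
    exact φ.one_of_mem_closedBall (ball_subset_closedBall hy)
  simp [gradient, hone.fderiv_eq]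

/- Adding a plateau raises `w` by a constant on the ball, and since the plateau has no gradient
where `w` does, it costs only a second-order amount of energy. -/
theorem exists_forall_exists_contDiff_add_le (hR : 0 < R) : ∃ C, ∀ w : Eu n → ℝ,
    ContDiff ℝ 1 w → (∀ x ∉ ball (0 : Eu n) R, w x = 0) → ∀ t > 0, ∀ θ > 0,
    ∃ v : Eu n → ℝ, ContDiff ℝ (⊤ : ℕ∞) v ∧ HasCompactSupport v ∧
      (∀ x ∈ ball 0 R, w x + t ≤ v x) ∧
      dirichletEnergy Set.univ v ≤ dirichletEnergy Set.univ w + C * t ^ 2 + θ := by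
  obtain ⟨φ, hφ, hφ₀, hφ₁, hφ'⟩ := exists_plateau (n := n) (R := R + 2) (by linarith)
  refine ⟨4 * dirichletEnergy Set.univ φ, fun w hw hw₀ t ht θ hθ => ?_⟩
  obtain ⟨ψ, hψ, hψ₀, hψw, hψE⟩ := exists_contDiff_abs_sub_le_dirichletEnergy_le hw hw₀ ht hθ
  have hψs : HasCompactSupport ψ := hasCompactSupport_of_eq_zero_notMem isBounded_ball hψ₀
  have h1 : (1 : WithTop ℕ∞) ≤ ((⊤ : ℕ∞) : WithTop ℕ∞) := by exact_mod_cast le_top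
  have htφ : ContDiff ℝ (⊤ : ℕ∞) fun x => 2 * t * φ x := contDiff_const.mul hφ
  have hgrad (x) : gradient ψ x = 0 ∨ gradient (fun x => 2 * t * φ x) x = 0 := by
    by_cases hx : x ∈ closedBall (0 : Eu n) (R + 1)
    · right
      rw [← norm_eq_zero, norm_gradient,
        fderiv_const_mul (hφ.differentiable (by simp) x), norm_smul, ← norm_gradient,
        hφ' x (closedBall_subset_ball (by linarith) hx), norm_zero, mul_zero]
    · exact .inl (gradient_eq_zero_of_eq_zero_notMem_ball hψ₀ hx)
  refine ⟨fun x => ψ x + 2 * t * φ x, hψ.add htφ, hψs.add hφ₀.mul_left, fun x hx => ?_, ?_⟩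
  · change w x + t ≤ ψ x + 2 * t * φ x
    rw [hφ₁ x (ball_subset_closedBall (ball_subset_ball (by linarith) hx))]
    linarith [(abs_le.1 (hψw x)).1]
  · rw [dirichletEnergy_add_of_gradient_eq_zero (hψ.of_le h1) hψs (htφ.of_le h1) hφ₀.mul_left
      hgrad, dirichletEnergy_const_mul _ (hφ.differentiable (by simp))]
    linarith

end TestFunctions

section BestConstant

variable {n : ℕ} {S : Set (Eu n)} {q : ℝ} {v : Eu n → ℝ}

/-- The Hartree double integral `∫∫ |u(x)|^q |u(z)|^q / |x - z|^(n-2)` over `S`: the denominator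
of the Rayleigh quotients `enRatio` and `CHLS`, up to the power `1 / q`. -/
def hartreeEnergy (S : Set (Eu n)) (q : ℝ) (u : Eu n → ℝ) : ℝ :=
  rieszForm S ((n : ℝ) - 2) fun x => |u x| ^ q

lemma hartreeEnergy_nonneg (hS : MeasurableSet S) : 0 ≤ hartreeEnergy S q v :=
  rieszForm_nonneg hS fun _ _ => by positivity

lemma enRatio_eq_div : enRatio S q v = dirichletEnergy S v / hartreeEnergy S q v ^ (1 / q) := rfl

lemma CHLS_eq_sInf : CHLS n = sInf {c : ℝ | ∃ v : Eu n → ℝ, ContDiff ℝ (⊤ : ℕ∞) v ∧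
    HasCompactSupport v ∧ v ≠ 0 ∧
    c = dirichletEnergy Set.univ v / hartreeEnergy Set.univ (pcrit n) v ^ (1 / pcrit n)} := by
  simp only [dirichletEnergy, hartreeEnergy, rieszForm, setIntegral_univ]
  rfl

lemma dirichletEnergy_div_hartreeEnergy_nonneg :
    0 ≤ dirichletEnergy Set.univ v / hartreeEnergy Set.univ q v ^ (1 / q) :=
  div_nonneg dirichletEnergy_nonneg (rpow_nonneg (hartreeEnergy_nonneg .univ) _)

lemma CHLS_nonneg (n : ℕ) : 0 ≤ CHLS n := by
  rw [CHLS_eq_sInf]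
  refine Real.sInf_nonneg ?_
  rintro _ ⟨v, -, -, -, rfl⟩
  exact dirichletEnergy_div_hartreeEnergy_nonneg

lemma one_lt_pcrit (hn : 3 ≤ n) : 1 < pcrit n := by
  have hn' : (3 : ℝ) ≤ n := by exact_mod_cast hn
  rw [pcrit, one_lt_div (by linarith)]
  linarith

lemma CHLS_mul_hartreeEnergy_rpow_le (hn : 3 ≤ n) (hv : ContDiff ℝ (⊤ : ℕ∞) v)
    (hv₀ : HasCompactSupport v) :
    CHLS n * hartreeEnergy Set.univ (pcrit n) v ^ (1 / pcrit n)
      ≤ dirichletEnergy Set.univ v := by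
  have hp : 0 < pcrit n := one_pos.trans (one_lt_pcrit hn)
  rcases (hartreeEnergy_nonneg .univ : 0 ≤ hartreeEnergy Set.univ (pcrit n) v).eq_or_lt
    with hzero | hpos
  · rw [← hzero, zero_rpow (one_div_pos.2 hp).ne', mul_zero]
    exact dirichletEnergy_nonneg
  · have hv_ne : v ≠ 0 := by
      rintro rfl
      simp [hartreeEnergy, rieszForm, zero_rpow hp.ne'] at hpos
    rw [← le_div_iff₀ (rpow_pos_of_pos hpos _), CHLS_eq_sInf]
    refine csInf_le ⟨0, ?_⟩ ⟨v, hv, hv₀, hv_ne, rfl⟩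
    rintro _ ⟨v, -, -, -, rfl⟩
    exact dirichletEnergy_div_hartreeEnergy_nonneg

lemma rieszForm_le_hartreeEnergy_univ (hn : 3 ≤ n) (hq : 0 < q) (hS : MeasurableSet S)
    (hv : Continuous v) (hv₀ : HasCompactSupport v) {h : Eu n → ℝ} (hh₀ : ∀ x ∈ S, 0 ≤ h x)
    (hhv : ∀ x ∈ S, h x ≤ |v x| ^ q) :
    rieszForm S ((n : ℝ) - 2) h ≤ hartreeEnergy Set.univ q v := by
  have hn' : (3 : ℝ) ≤ n := by exact_mod_cast hn
  have hcont : Continuous fun x => |v x| ^ q := hv.abs.rpow_const fun _ => .inr hq.le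
  have hsupp : HasCompactSupport fun x => |v x| ^ q :=
    hv₀.comp_left (g := fun s => |s| ^ q) (by simp [zero_rpow hq.ne'])
  obtain ⟨m, hm⟩ := hsupp.exists_bound_of_continuous hcont
  exact rieszForm_mono (by linarith) (by linarith) hS .univ (Set.subset_univ S)
    (hcont.integrable_of_hasCompactSupport hsupp).integrableOn (fun _ _ => by positivity)
    (fun x _ => (le_abs_self _).trans (hm x)) hh₀ hhv

theorem exists_forall_CHLS_mul_rieszForm_rpow_le (hn : 3 ≤ n) {R : ℝ} (hR : 0 < R) :
    ∃ C, ∀ w : Eu n → ℝ, ContDiff ℝ 1 w → (∀ x ∉ ball (0 : Eu n) R, w x = 0) → ∀ t > 0,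
      ∀ S ⊆ ball (0 : Eu n) R, MeasurableSet S → ∀ h : Eu n → ℝ, (∀ x ∈ S, 0 ≤ w x) →
      (∀ x ∈ S, 0 ≤ h x) → (∀ x ∈ S, h x ≤ (w x + t) ^ pcrit n) →
      CHLS n * rieszForm S ((n : ℝ) - 2) h ^ (1 / pcrit n)
        ≤ dirichletEnergy Set.univ w + C * t ^ 2 := by
  obtain ⟨C, hC⟩ := exists_forall_exists_contDiff_add_le (n := n) hR
  refine ⟨C, fun w hw hw₀ t ht S hSR hS h hw_nonneg hh₀ hhw => ?_⟩
  have hp : 0 < pcrit n := one_pos.trans (one_lt_pcrit hn)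
  refine le_of_forall_pos_le_add fun θ hθ => ?_
  obtain ⟨v, hv, hv₀, hwv, hvE⟩ := hC w hw hw₀ t ht θ hθ
  have hhv (x) (hx : x ∈ S) : h x ≤ |v x| ^ pcrit n := by
    have := hw_nonneg x hx
    refine (hhw x hx).trans (rpow_le_rpow (by positivity) ?_ hp.le)
    exact (hwv x (hSR hx)).trans (le_abs_self _)
  calc CHLS n * rieszForm S ((n : ℝ) - 2) h ^ (1 / pcrit n)
      ≤ CHLS n * hartreeEnergy Set.univ (pcrit n) v ^ (1 / pcrit n) := by
        have := CHLS_nonneg n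
        have := rieszForm_nonneg (k := (n : ℝ) - 2) hS hh₀
        gcongr
        exact rieszForm_le_hartreeEnergy_univ hn hp hS hv.continuous hv₀ hh₀ hhv
    _ ≤ dirichletEnergy Set.univ v := CHLS_mul_hartreeEnergy_rpow_le hn hv hv₀
    _ ≤ dirichletEnergy Set.univ w + C * t ^ 2 + θ := hvE

end BestConstant

section LeastEnergySolutions

variable {n : ℕ} {Ω : Set (Eu n)} {u : Eu n → ℝ} {ε : ℝ}

lemma le_supN (hΩ : IsBounded Ω) (hu : Continuous u) {x : Eu n} (hx : x ∈ Ω) :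
    u x ≤ supN Ω u :=
  (le_abs_self _).trans <| le_csSup (hΩ.isCompact_closure.image hu.abs).bddAbove
    ⟨x, subset_closure hx, rfl⟩

lemma continuous_of_continuousOn_closure (hΩ : IsOpen Ω) (hu : ContinuousOn u (closure Ω))
    (hu₀ : ∀ x ∈ Ωᶜ, u x = 0) : Continuous u := by
  have hunion : closure Ω ∪ Ωᶜ = Set.univ :=
    Set.compl_subset_iff_union.1 (Set.compl_subset_compl.2 subset_closure)
  rw [← continuousOn_univ, ← hunion]
  exact hu.union_of_isClosed (continuousOn_const.congr hu₀) isClosed_closure hΩ.isClosed_compl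

namespace IsSol

lemma continuous (h : IsSol Ω ε u) (hΩ : IsOpen Ω) : Continuous u :=
  continuous_of_continuousOn_closure hΩ h.2.1 h.2.2.2.2

lemma contDiffOn (h : IsSol Ω ε u) : ContDiffOn ℝ 2 u Ω := h.1

lemma eq_zero (h : IsSol Ω ε u) : ∀ x ∉ Ω, u x = 0 := h.2.2.2.2

lemma pos (h : IsSol Ω ε u) : ∀ x ∈ Ω, 0 < u x := h.2.2.2.1

lemma nonneg (h : IsSol Ω ε u) (x : Eu n) : 0 ≤ u x := by
  by_cases hx : x ∈ Ω
  · exact (h.pos x hx).le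
  · exact (h.eq_zero x hx).ge

lemma neg_lapl_eq (h : IsSol Ω ε u) {x : Eu n} (hx : x ∈ Ω) :
    -lapl u x = rzk Ω ((n : ℝ) - 2) (fun z => u z ^ (pcrit n - ε)) x * u x ^ (pcrit n - ε - 1) := by
  rw [sub_right_comm]
  exact h.2.2.1 x hx

lemma integrableOn_rpow (h : IsSol Ω ε u) (hΩ : IsOpen Ω) (hΩb : IsBounded Ω) {q : ℝ}
    (hq : 0 ≤ q) : IntegrableOn (fun x => u x ^ q) Ω :=
  (((h.continuous hΩ).rpow_const fun _ => .inr hq).continuousOn.integrableOn_compact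
    hΩb.isCompact_closure).mono_set subset_closure

lemma exists_forall_le (h : IsSol Ω ε u) (hΩ : IsOpen Ω) (hΩb : IsBounded Ω)
    (hΩne : Ω.Nonempty) : ∃ x₀ ∈ Ω, ∀ x, u x ≤ u x₀ := by
  obtain ⟨x₀, -, hmax⟩ := hΩb.isCompact_closure.exists_isMaxOn hΩne.closure
    (h.continuous hΩ).continuousOn
  obtain ⟨y, hy⟩ := hΩne
  have hpos : 0 < u x₀ := (h.pos y hy).trans_le (hmax (subset_closure hy))
  refine ⟨x₀, by_contra fun hx₀ => hpos.ne' (h.eq_zero x₀ hx₀), fun x => ?_⟩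
  by_cases hx : x ∈ Ω
  · exact hmax (subset_closure hx)
  · exact (h.eq_zero x hx).trans_le hpos.le

lemma hartreeEnergy_eq (h : IsSol Ω ε u) (q : ℝ) :
    hartreeEnergy Ω q u = rieszForm Ω ((n : ℝ) - 2) fun x => u x ^ q := by
  simp only [hartreeEnergy, abs_of_nonneg (h.nonneg _)]

lemma integrableOn_lapl (hn : 3 ≤ n) (h : IsSol Ω ε u) (hΩ : IsOpen Ω) (hΩb : IsBounded Ω)
    (hΩne : Ω.Nonempty) (hε : 1 ≤ pcrit n - ε) : IntegrableOn (lapl u) Ω := by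
  have hn' : (3 : ℝ) ≤ n := by exact_mod_cast hn
  obtain ⟨x₀, -, hmax⟩ := h.exists_forall_le hΩ hΩb hΩne
  have hint := integrableOn_rzk_mul (k := (n : ℝ) - 2) (by linarith) (by linarith)
    hΩ.measurableSet (h.integrableOn_rpow hΩ hΩb (by linarith : 0 ≤ pcrit n - ε))
    (fun x _ => rpow_nonneg (h.nonneg x) _)
    (fun x _ => rpow_le_rpow (h.nonneg x) (hmax x) (by linarith))
    (h.integrableOn_rpow hΩ hΩb (by linarith : 0 ≤ pcrit n - ε - 1))
  refine hint.neg.congr_fun (fun x hx => ?_) hΩ.measurableSet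
  rw [Pi.neg_apply, ← h.neg_lapl_eq hx, neg_neg]

lemma dirichletEnergy_eq_hartreeEnergy (hn : 3 ≤ n) (h : IsSol Ω ε u) (hΩ : IsOpen Ω)
    (hΩb : IsBounded Ω) (hΩne : Ω.Nonempty) (hε : 1 ≤ pcrit n - ε) :
    dirichletEnergy Ω u = hartreeEnergy Ω (pcrit n - ε) u := by
  rw [dirichletEnergy_eq_neg_setIntegral_mul_lapl hΩ hΩb (h.continuous hΩ) h.eq_zero h.contDiffOn
    h.pos (h.integrableOn_lapl hn hΩ hΩb hΩne hε), h.hartreeEnergy_eq, rieszForm, ← integral_neg]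
  refine setIntegral_congr_fun hΩ.measurableSet fun x hx => ?_
  have hux : u x * u x ^ (pcrit n - ε - 1) = u x ^ (pcrit n - ε) := by
    rw [mul_comm, ← rpow_add_one (h.pos x hx).ne', sub_add_cancel]
  calc -(u x * lapl u x) = u x * -lapl u x := by ring
    _ = _ := by rw [h.neg_lapl_eq hx, mul_left_comm, hux]

lemma le_mul_rpow_mul_sq (hn : 3 ≤ n) (h : IsSol Ω ε u) (hΩ : IsOpen Ω) {R m r : ℝ}
    (hΩR : Ω ⊆ ball 0 R) (hε : 1 ≤ pcrit n - ε) (hum : ∀ x, u x ≤ m) (hr : 0 < r) {x : Eu n}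
    (hx : x ∈ Ω) :
    u x ≤ (m ^ (pcrit n - ε) * rieszMass n ((n : ℝ) - 2) r
      + (∫ z in Ω, u z ^ (pcrit n - ε)) / r ^ ((n : ℝ) - 2)) * m ^ (pcrit n - ε - 1) * R ^ 2 := by
  have hn' : (3 : ℝ) ≤ n := by exact_mod_cast hn
  have hm : 0 ≤ m := (h.nonneg 0).trans (hum 0)
  have hpow (z) (q : ℝ) : 0 ≤ u z ^ q := rpow_nonneg (h.nonneg z) q
  have hI : 0 ≤ ∫ z in Ω, u z ^ (pcrit n - ε) := integral_nonneg fun z => hpow z _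
  have hmass := rieszMass_nonneg (n := n) (k := (n : ℝ) - 2) (r := r)
  set B := m ^ (pcrit n - ε) * rieszMass n ((n : ℝ) - 2) r
      + (∫ z in Ω, u z ^ (pcrit n - ε)) / r ^ ((n : ℝ) - 2)
  have hlapl (y) (hy : y ∈ Ω) : -lapl u y ≤ B * m ^ (pcrit n - ε - 1) := by
    rw [h.neg_lapl_eq hy]
    gcongr ?_ * ?_
    · exact hpow y _
    · exact rzk_le_mul_rieszMass_add (by linarith) (by linarith) hΩ.measurableSet (by positivity)
        (h.integrableOn_rpow hΩ (isBounded_ball.subset hΩR) (by linarith)) (fun z _ => hpow z _)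
        (fun z _ => rpow_le_rpow (h.nonneg z) (hum z) (by linarith)) hr y
    · exact rpow_le_rpow (h.nonneg y) (hum y) (by linarith)
  refine (le_mul_sq_of_neg_lapl_le (by omega) hΩ hΩR (h.continuous hΩ) h.eq_zero h.contDiffOn
    (by positivity) hlapl hx).trans ?_
  gcongr
  exact div_le_self (by positivity) (by linarith)

lemma one_le_mul_rpow (hn : 3 ≤ n) (h : IsSol Ω ε u) (hΩ : IsOpen Ω) {R : ℝ}
    (hΩR : Ω ⊆ ball 0 R) (hε : 1 ≤ pcrit n - ε) {x : Eu n} (hx : x ∈ Ω) (hux : ∀ y, u y ≤ u x) :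
    1 ≤ (rieszMass n ((n : ℝ) - 2) 1 + volume.real (ball (0 : Eu n) R)) * R ^ 2
      * u x ^ (2 * (pcrit n - ε - 1)) := by
  set q := pcrit n - ε
  have hm : 0 < u x := h.pos x hx
  have hI : ∫ z in Ω, u z ^ q ≤ u x ^ q * volume.real (ball (0 : Eu n) R) :=
    calc ∫ z in Ω, u z ^ q ≤ ∫ _ in Ω, u x ^ q :=
          setIntegral_mono_on (h.integrableOn_rpow hΩ (isBounded_ball.subset hΩR) (by linarith))
            (integrableOn_const ((measure_mono hΩR).trans_lt measure_ball_lt_top).ne)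
            hΩ.measurableSet fun z _ => rpow_le_rpow (h.nonneg z) (hux z) (by linarith)
      _ = u x ^ q * volume.real Ω := by rw [setIntegral_const, smul_eq_mul, mul_comm]
      _ ≤ _ := by
          gcongr
          exact measure_ball_lt_top.ne
  have hbound := h.le_mul_rpow_mul_sq hn hΩ hΩR hε hux one_pos hx
  rw [one_rpow, div_one] at hbound
  have hpow : u x ^ q * u x ^ (q - 1) = u x ^ (2 * (q - 1)) * u x := by
    rw [← rpow_add hm, ← rpow_add_one hm.ne']
    ring_nf
  refine le_of_mul_le_mul_right ?_ hm
  calc 1 * u x ≤ (u x ^ q * rieszMass n ((n : ℝ) - 2) 1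
          + u x ^ q * volume.real (ball (0 : Eu n) R)) * u x ^ (q - 1) * R ^ 2 := by
        rw [one_mul]
        refine hbound.trans ?_
        gcongr
    _ = (rieszMass n ((n : ℝ) - 2) 1 + volume.real (ball (0 : Eu n) R)) * R ^ 2
          * (u x ^ q * u x ^ (q - 1)) := by ring
    _ = _ := by rw [hpow, ← mul_assoc]

theorem exists_pos_forall_exists_le (hn : 3 ≤ n) (R : ℝ) {q₀ : ℝ} (hq₀ : 1 < q₀) :
    ∃ m₀ > 0, ∀ Ω ⊆ ball (0 : Eu n) R, IsOpen Ω → Ω.Nonempty → ∀ ε u, IsSol Ω ε u →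
      q₀ ≤ pcrit n - ε → ∃ x ∈ Ω, m₀ ≤ u x := by
  set A := (rieszMass n ((n : ℝ) - 2) 1 + volume.real (ball (0 : Eu n) R)) * R ^ 2
  have hA : 0 ≤ A := mul_nonneg (add_nonneg rieszMass_nonneg measureReal_nonneg) (sq_nonneg R)
  have hlim : Tendsto (fun s : ℝ => A * s ^ (2 * (q₀ - 1))) (𝓝[>] 0) (𝓝 0) := by
    have hcont : Continuous fun s : ℝ => A * s ^ (2 * (q₀ - 1)) :=
      continuous_const.mul (continuous_id.rpow_const fun _ => .inr (by linarith))
    refine (hcont.tendsto' 0 0 ?_).mono_left nhdsWithin_le_nhds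
    rw [zero_rpow (by linarith), mul_zero]
  obtain ⟨m₀, hm₀A, hm₀, hm₀1⟩ :=
    ((hlim.eventually_lt_const one_pos).and (Ioc_mem_nhdsGT one_pos)).exists
  refine ⟨m₀, hm₀, fun Ω hΩR hΩ hΩne ε u h hε => ?_⟩
  obtain ⟨x, hx, hux⟩ := h.exists_forall_le hΩ (isBounded_ball.subset hΩR) hΩne
  refine ⟨x, hx, le_of_not_gt fun hlt => hm₀A.not_ge ?_⟩
  have hpos := h.pos x hx
  calc 1 ≤ A * u x ^ (2 * (pcrit n - ε - 1)) :=
        h.one_le_mul_rpow hn hΩ hΩR (by linarith) hx hux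
    _ ≤ A * u x ^ (2 * (q₀ - 1)) := by
        gcongr A * ?_
        exact rpow_le_rpow_of_exponent_ge hpos (hlt.le.trans hm₀1) (by linarith)
    _ ≤ A * m₀ ^ (2 * (q₀ - 1)) := by
        gcongr A * ?_
        exact rpow_le_rpow hpos.le hlt.le (by linarith)

theorem exists_pos_forall_le_setIntegral_rpow (hn : 3 ≤ n) {R q₀ : ℝ} (hR : 0 < R) (M : ℝ)
    (hq₀ : 1 < q₀) :
    ∃ I₀ > 0, ∀ Ω ⊆ ball (0 : Eu n) R, IsOpen Ω → Ω.Nonempty → ∀ ε ≥ 0, ∀ u, IsSol Ω ε u →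
      (∀ x, u x ≤ M) → q₀ ≤ pcrit n - ε → I₀ ≤ ∫ z in Ω, u z ^ (pcrit n - ε) := by
  have hn' : (3 : ℝ) ≤ n := by exact_mod_cast hn
  obtain ⟨m₀, hm₀, hlow⟩ := exists_pos_forall_exists_le hn R hq₀
  set N := max M 1 ^ pcrit n
  have : 0 < N := rpow_pos_of_pos (lt_max_of_lt_right one_pos) _
  have hmass : Tendsto (fun r => N * rieszMass n ((n : ℝ) - 2) r * N * R ^ 2) (𝓝[>] 0) (𝓝 0) := by
    simpa only [mul_zero, zero_mul] using (((tendsto_rieszMass_nhdsGT_zero (by linarith)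
      (by linarith)).const_mul N).mul_const N).mul_const (R ^ 2)
  obtain ⟨r, hrm, hr⟩ :=
    ((hmass.eventually_le_const (half_pos hm₀)).and self_mem_nhdsWithin).exists
  replace hr : 0 < r := hr
  refine ⟨m₀ / 2 * r ^ ((n : ℝ) - 2) / (N * R ^ 2), by positivity,
    fun Ω hΩR hΩ hΩne ε hε₀ u h huM hε => ?_⟩
  have hpowN (q : ℝ) (hq : q ≤ pcrit n) : max M 1 ^ q ≤ N :=
    rpow_le_rpow_of_exponent_le (le_max_right M 1) hq
  have hI : 0 ≤ ∫ z in Ω, u z ^ (pcrit n - ε) :=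
    integral_nonneg fun z => rpow_nonneg (h.nonneg z) _
  obtain ⟨x, hx, hux⟩ := hlow Ω hΩR hΩ hΩne ε u h hε
  have hbound : m₀ ≤ (N * rieszMass n ((n : ℝ) - 2) r
      + (∫ z in Ω, u z ^ (pcrit n - ε)) / r ^ ((n : ℝ) - 2)) * N * R ^ 2 := by
    refine hux.trans ((h.le_mul_rpow_mul_sq hn hΩ hΩR (by linarith)
      (fun y => (huM y).trans (le_max_left M 1)) hr hx).trans ?_)
    have := rieszMass_nonneg (n := n) (k := (n : ℝ) - 2) (r := r)
    gcongr
    · exact hpowN _ (by linarith)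
    · exact hpowN _ (by linarith)
  rw [div_le_iff₀ (by positivity), ← le_div_iff₀ (by positivity)]
  linarith [mul_div_right_comm (∫ z in Ω, u z ^ (pcrit n - ε)) (N * R ^ 2) (r ^ ((n : ℝ) - 2))]

lemma sq_setIntegral_div_rpow_le_hartreeEnergy (hn : 3 ≤ n) (h : IsSol Ω ε u) (hΩ : IsOpen Ω)
    {R q : ℝ} (hΩR : Ω ⊆ ball 0 R) (hΩne : Ω.Nonempty) (hq : 0 ≤ q) :
    (∫ z in Ω, u z ^ q) ^ 2 / (2 * R) ^ ((n : ℝ) - 2) ≤ hartreeEnergy Ω q u := by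
  have hn' : (3 : ℝ) ≤ n := by exact_mod_cast hn
  have hΩb : IsBounded Ω := isBounded_ball.subset hΩR
  obtain ⟨x₀, -, hmax⟩ := h.exists_forall_le hΩ hΩb hΩne
  rw [h.hartreeEnergy_eq]
  refine sq_setIntegral_div_rpow_le_rieszForm (by linarith) (by linarith) hΩ.measurableSet
    (h.integrableOn_rpow hΩ hΩb hq) (fun x _ => rpow_nonneg (h.nonneg x) _)
    (fun x _ => rpow_le_rpow (h.nonneg x) (hmax x) hq) fun x hx z hz => ?_
  have hx := mem_ball_zero_iff.1 (hΩR hx)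
  have hz := mem_ball_zero_iff.1 (hΩR hz)
  linarith [norm_sub_le x z]

theorem exists_pos_forall_le_hartreeEnergy (hn : 3 ≤ n) {R q₀ : ℝ} (hR : 0 < R) (M : ℝ)
    (hq₀ : 1 < q₀) :
    ∃ c > 0, ∀ Ω ⊆ ball (0 : Eu n) R, IsOpen Ω → Ω.Nonempty → ∀ ε ≥ 0, ∀ u, IsSol Ω ε u →
      (∀ x, u x ≤ M) → q₀ ≤ pcrit n - ε → c ≤ hartreeEnergy Ω (pcrit n - ε) u := by
  obtain ⟨I₀, hI₀, hlow⟩ := exists_pos_forall_le_setIntegral_rpow hn hR M hq₀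
  refine ⟨I₀ ^ 2 / (2 * R) ^ ((n : ℝ) - 2), by positivity,
    fun Ω hΩR hΩ hΩne ε hε₀ u h huM hε => ?_⟩
  refine le_trans ?_ (h.sq_setIntegral_div_rpow_le_hartreeEnergy hn hΩ hΩR hΩne (by linarith))
  gcongr
  exact hlow Ω hΩR hΩ hΩne ε hε₀ u h huM hε

end IsSol

end LeastEnergySolutions

section Blowup

variable {n : ℕ} {Ω : Set (Eu n)} {ε₀ : ℝ} {u : ℝ → Eu n → ℝ}

lemma rpow_sub_mul_mul_rpow_le_add_rpow {p q s t M : ℝ} (hq : 0 ≤ q) (hqp : q ≤ p) (ht : 0 < t)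
    (hs : 0 < s) (hsM : s ≤ M) : t ^ (p - q) * (1 + t / M) ^ q * s ^ q ≤ (s + t) ^ p := by
  have hM : 0 < M := hs.trans_le hsM
  have hscale : (1 + t / M) * s ≤ s + t := by
    have : t / M * s ≤ t / M * M := by gcongr
    rw [div_mul_cancel₀ _ hM.ne'] at this
    linarith
  calc t ^ (p - q) * (1 + t / M) ^ q * s ^ q = t ^ (p - q) * ((1 + t / M) * s) ^ q := by
        rw [mul_assoc, ← mul_rpow (by positivity) hs.le]
    _ ≤ (s + t) ^ (p - q) * (s + t) ^ q := by
        gcongr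
        linarith
    _ = (s + t) ^ p := by rw [← rpow_add (by positivity), sub_add_cancel]

/- The test function is `softThreshold t ∘ u`, raised by `3 * t` so that it dominates `u + t`: this
beats `(1 + t / M) * u` pointwise, at a cost of order `t ^ 2` only. -/
theorem IsSol.exists_forall_CHLS_mul_hartreeEnergy_rpow_le (hn : 3 ≤ n) {R : ℝ} (hR : 0 < R) :
    ∃ C, ∀ Ω ⊆ ball (0 : Eu n) R, IsOpen Ω → Ω.Nonempty → ∀ ε ≥ 0, 1 ≤ pcrit n - ε →
      ∀ u, IsSol Ω ε u → ∀ M, (∀ x, u x ≤ M) → ∀ t > 0,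
      CHLS n * ((t ^ ε * (1 + t / M) ^ (pcrit n - ε)) ^ 2 * hartreeEnergy Ω (pcrit n - ε) u)
        ^ (1 / pcrit n) ≤ hartreeEnergy Ω (pcrit n - ε) u + C * t ^ 2 := by
  obtain ⟨C, hC⟩ := exists_forall_CHLS_mul_rieszForm_rpow_le hn hR
  refine ⟨9 * C, fun Ω hΩR hΩ hΩne ε hε₀ hε u h M huM t ht => ?_⟩
  have hΩb : IsBounded Ω := isBounded_ball.subset hΩR
  have hL := h.integrableOn_lapl hn hΩ hΩb hΩne hε
  have hw : ContDiff ℝ 1 fun x => softThreshold t (u x) := by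
    simpa only [mul_one] using contDiff_softThreshold_comp_mul (w := fun _ => 1) ht hΩ
      (h.continuous hΩ) h.eq_zero (h.contDiffOn.of_le one_le_two) fun _ _ => contDiffAt_const
  have hw₀ (x) (hx : x ∉ ball (0 : Eu n) R) : softThreshold t (u x) = 0 :=
    softThreshold_eq_zero ht (by rw [h.eq_zero x fun hxΩ => hx (hΩR hxΩ)]; exact ht.le)
  have hdom (x) (hx : x ∈ Ω) : t ^ ε * (1 + t / M) ^ (pcrit n - ε) * |u x| ^ (pcrit n - ε)
      ≤ (softThreshold t (u x) + 3 * t) ^ pcrit n := by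
    have hux := h.pos x hx
    have hpt := rpow_sub_mul_mul_rpow_le_add_rpow (by linarith) (sub_le_self (pcrit n) hε₀) ht hux
      (huM x)
    rw [sub_sub_cancel] at hpt
    rw [abs_of_pos hux]
    refine hpt.trans (rpow_le_rpow (by positivity) ?_ (by linarith))
    linarith [sub_two_mul_le_softThreshold ht hux.le]
  have hM : 0 ≤ M := (h.nonneg 0).trans (huM 0)
  have htest := hC _ hw hw₀ (3 * t) (by positivity) Ω hΩR hΩ.measurableSet _
    (fun x _ => softThreshold_nonneg (h.nonneg x)) (fun x _ => by positivity) hdom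
  rw [rieszForm_const_mul, ← hartreeEnergy] at htest
  have hEnergy := dirichletEnergy_softThreshold_comp_le hΩ hΩb (h.continuous hΩ) h.eq_zero
    h.contDiffOn h.pos hL ht
  rw [h.dirichletEnergy_eq_hartreeEnergy hn hΩ hΩb hΩne hε] at hEnergy
  linarith

lemma IsSol.hartreeEnergy_eq_enRatio_rpow (hn : 3 ≤ n) {ε : ℝ} {u : Eu n → ℝ} (h : IsSol Ω ε u)
    (hΩ : IsOpen Ω) (hΩb : IsBounded Ω) (hΩne : Ω.Nonempty) (hε : 1 < pcrit n - ε)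
    (hpos : 0 < hartreeEnergy Ω (pcrit n - ε) u) :
    hartreeEnergy Ω (pcrit n - ε) u
      = enRatio Ω (pcrit n - ε) u ^ ((pcrit n - ε) / (pcrit n - ε - 1)) := by
  have hq : pcrit n - ε - 1 ≠ 0 := by linarith
  have hq' : pcrit n - ε ≠ 0 := by linarith
  rw [enRatio_eq_div, h.dirichletEnergy_eq_hartreeEnergy hn hΩ hΩb hΩne hε.le]
  nth_rewrite 2 [← rpow_one (hartreeEnergy Ω (pcrit n - ε) u)]
  rw [← rpow_sub hpos, ← rpow_mul hpos.le, one_sub_div hq', div_mul_div_cancel₀' hq,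
    div_self hq', rpow_one]

lemma tendsto_mul_rpow_one_div {S p t b : ℝ} {G : ℝ → ℝ} (hS : 0 ≤ S) (hp : 1 < p) (ht : 0 < t)
    (hb : 0 < b) (hG : Tendsto G (𝓝[>] 0) (𝓝 (S ^ (p / (p - 1))))) :
    Tendsto (fun ε => S * ((t ^ ε * b ^ (p - ε)) ^ 2 * G ε) ^ (1 / p)) (𝓝[>] 0)
      (𝓝 (S ^ (p / (p - 1)) * b ^ 2)) := by
  have hp' : 0 < p - 1 := by linarith
  have hcont : Continuous fun ε => (t ^ ε * b ^ (p - ε)) ^ 2 :=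
    ((continuous_const_rpow ht.ne').mul
      ((continuous_const_rpow hb.ne').comp (continuous_const.sub continuous_id))).pow 2
  have hlim : Tendsto (fun ε => (t ^ ε * b ^ (p - ε)) ^ 2) (𝓝[>] 0) (𝓝 ((b ^ 2) ^ p)) := by
    refine (hcont.tendsto' 0 _ ?_).mono_left nhdsWithin_le_nhds
    rw [rpow_zero, one_mul, sub_zero, ← rpow_natCast, ← rpow_natCast, ← rpow_mul hb.le,
      ← rpow_mul hb.le, mul_comm]
  have hvalue : S ^ (p / (p - 1)) * b ^ 2
      = S * ((b ^ 2) ^ p * S ^ (p / (p - 1))) ^ (1 / p) := by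
    have hSp : S ^ (p / (p - 1)) = S * (S ^ (p / (p - 1))) ^ (1 / p) := by
      have hexp : 1 + p / (p - 1) * (1 / p) = p / (p - 1) := by
        field_simp
        ring
      rw [← rpow_mul hS, ← rpow_one_add' hS (hexp ▸ (by positivity)), hexp]
    rw [mul_rpow (by positivity) (by positivity), ← rpow_mul (by positivity),
      mul_one_div_cancel (by linarith), rpow_one, mul_left_comm, ← hSp, mul_comm]
  rw [hvalue]
  exact ((hlim.mul hG).rpow_const (.inr (by positivity))).const_mul S

lemma exists_pos_add_mul_sq_lt_mul_one_add_sq {a b : ℝ} (ha : 0 < a) (hb : 0 < b) (C : ℝ) :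
    ∃ t > 0, a + C * t ^ 2 < a * (1 + t * b) ^ 2 := by
  have hlim : Tendsto (fun t => C * t) (𝓝[>] 0) (𝓝 0) :=
    (Continuous.tendsto' (by fun_prop) 0 0 (mul_zero C)).mono_left nhdsWithin_le_nhds
  obtain ⟨t, htC, ht⟩ := ((hlim.eventually_lt_const (by positivity : 0 < 2 * a * b)).and
    self_mem_nhdsWithin).exists
  replace ht : 0 < t := ht
  refine ⟨t, ht, ?_⟩
  calc a + C * t ^ 2 = a + C * t * t := by ring
    _ < a + 2 * a * b * t := by gcongr
    _ ≤ a + 2 * a * b * t + a * (t * b) ^ 2 := le_add_of_nonneg_right (by positivity)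
    _ = a * (1 + t * b) ^ 2 := by ring

namespace LeastEnergyFamily

lemma tendsto_enRatio_rpow (hn : 3 ≤ n) (h : LeastEnergyFamily Ω ε₀ u) :
    Tendsto (fun ε => enRatio Ω (pcrit n - ε) (u ε) ^ ((pcrit n - ε) / (pcrit n - ε - 1)))
      (𝓝[>] 0) (𝓝 (CHLS n ^ (pcrit n / (pcrit n - 1)))) := by
  have hp : 0 < pcrit n - 1 := sub_pos.2 (one_lt_pcrit hn)
  have hexp : Tendsto (fun ε => (pcrit n - ε) / (pcrit n - ε - 1)) (𝓝[>] 0)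
      (𝓝 (pcrit n / (pcrit n - 1))) := by
    have : ContinuousAt (fun ε => (pcrit n - ε) / (pcrit n - ε - 1)) 0 :=
      ContinuousAt.div (by fun_prop) (by fun_prop) (by simpa using hp.ne')
    simpa only [sub_zero] using this.tendsto.mono_left nhdsWithin_le_nhds
  exact h.2.rpow hexp (.inr (div_pos (by linarith) hp))

theorem not_frequently_forall_le (hn : 3 ≤ n) (hΩ : IsOpen Ω) (hΩb : IsBounded Ω)
    (hΩne : Ω.Nonempty) (hε₀ : 0 < ε₀) (h : LeastEnergyFamily Ω ε₀ u) (M : ℝ) :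
    ¬∃ᶠ ε in 𝓝[>] 0, ∀ x, u ε x ≤ M := by
  intro hbdd
  obtain ⟨R, hR, hΩR⟩ := hΩb.subset_ball_lt 0 0
  obtain ⟨q₀, hq₀, hq₀p⟩ := exists_between (one_lt_pcrit hn)
  obtain ⟨c, hc, hlow⟩ := IsSol.exists_pos_forall_le_hartreeEnergy hn hR M hq₀
  obtain ⟨C, hC⟩ := IsSol.exists_forall_CHLS_mul_hartreeEnergy_rpow_le hn hR
  have hlim := h.tendsto_enRatio_rpow hn
  set G : ℝ → ℝ := fun ε => enRatio Ω (pcrit n - ε) (u ε) ^ ((pcrit n - ε) / (pcrit n - ε - 1))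
  have hfreq : ∃ᶠ ε in 𝓝[>] 0, 0 < M ∧ c ≤ G ε ∧ ∀ t > 0,
      CHLS n * ((t ^ ε * (1 + t / M) ^ (pcrit n - ε)) ^ 2 * G ε) ^ (1 / pcrit n)
        ≤ G ε + C * t ^ 2 := by
    have hsmall : ∀ᶠ ε in 𝓝[>] (0 : ℝ), ε ∈ Set.Ioo 0 (min ε₀ (pcrit n - q₀)) :=
      Ioo_mem_nhdsGT (lt_min hε₀ (sub_pos.2 hq₀p))
    refine (hbdd.and_eventually hsmall).mono fun ε ⟨huM, hε, hεmin⟩ => ?_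
    obtain ⟨hεε₀, hεq₀⟩ := lt_min_iff.1 hεmin
    have hsol := h.1 ε ⟨hε, hεε₀⟩
    obtain ⟨y, hy⟩ := hΩne
    have hD := hlow Ω hΩR hΩ ⟨y, hy⟩ ε hε.le (u ε) hsol huM (by linarith)
    rw [show G ε = hartreeEnergy Ω (pcrit n - ε) (u ε) from
      (hsol.hartreeEnergy_eq_enRatio_rpow hn hΩ hΩb ⟨y, hy⟩ (by linarith) (hc.trans_le hD)).symm]
    exact ⟨(hsol.pos y hy).trans_le (huM y), hD,
      hC Ω hΩR hΩ ⟨y, hy⟩ ε hε.le (by linarith) (u ε) hsol M huM⟩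
  have hM : 0 < M := hfreq.exists.choose_spec.1
  have hG₀ : 0 < CHLS n ^ (pcrit n / (pcrit n - 1)) :=
    hc.trans_le (ge_of_tendsto_of_frequently hlim (hfreq.mono fun _ H => H.2.1))
  obtain ⟨t, ht, hlt⟩ := exists_pos_add_mul_sq_lt_mul_one_add_sq hG₀ (one_div_pos.2 hM) C
  rw [mul_one_div] at hlt
  exact hlt.not_ge <| le_of_tendsto_of_tendsto_of_frequently
    (tendsto_mul_rpow_one_div (CHLS_nonneg n) (one_lt_pcrit hn) ht (by positivity) hlim)
    (hlim.add_const _) (hfreq.mono fun _ H => H.2.2 t ht)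

theorem tendsto_supN_atTop (hn : 3 ≤ n) (hΩ : IsOpen Ω) (hΩb : IsBounded Ω) (hΩne : Ω.Nonempty)
    (hε₀ : 0 < ε₀) (h : LeastEnergyFamily Ω ε₀ u) :
    Tendsto (fun ε => supN Ω (u ε)) (𝓝[>] 0) atTop := by
  refine tendsto_atTop.2 fun M => ?_
  have hsmall : ∀ᶠ ε in 𝓝[>] 0, ε ∈ Set.Ioo 0 ε₀ := Ioo_mem_nhdsGT hε₀
  filter_upwards [not_frequently.1 (h.not_frequently_forall_le hn hΩ hΩb hΩne hε₀ M), hsmall]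
    with ε hunbdd hε
  obtain ⟨x, hx⟩ := not_forall.1 hunbdd
  have hsol := h.1 ε hε
  obtain ⟨y, hy, hmax⟩ := hsol.exists_forall_le hΩ hΩb hΩne
  exact (not_le.1 hx).le.trans ((hmax x).trans (le_supN hΩb (hsol.continuous hΩ) hy))

end LeastEnergyFamily

lemma tendsto_atTop_of_tendsto_rpow_atTop {α : Type*} {l : Filter α} {f a : α → ℝ} {b : ℝ}
    (hb : 0 < b) (ha : Tendsto a l (𝓝 b)) (hf : ∀ᶠ x in l, 0 < f x)
    (hfa : Tendsto (fun x => f x ^ a x) l atTop) : Tendsto f l atTop := by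
  refine tendsto_atTop.2 fun L => ?_
  filter_upwards [hf, ha.eventually_const_lt hb, ha.eventually_lt_const (lt_add_one b),
    hfa.eventually_gt_atTop (max L 1 ^ (b + 1))] with x hfx ha₀ hab hlarge
  refine le_of_not_gt fun hlt => hlarge.not_ge ?_
  calc f x ^ a x ≤ max L 1 ^ a x :=
        rpow_le_rpow hfx.le (hlt.le.trans (le_max_left L 1)) ha₀.le
    _ ≤ max L 1 ^ (b + 1) := rpow_le_rpow_of_exponent_le (le_max_right L 1) hab.le

end Blowup

theorem statement_8_general {n : ℕ} (hn : 3 ≤ n)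
    (Ω : Set (Eu n)) (hΩo : IsOpen Ω) (hΩb : IsBounded Ω) (hΩne : Ω.Nonempty)
    (ε₀ : ℝ) (hε₀ : 0 < ε₀) (u : ℝ → Eu n → ℝ)
    (hfam : LeastEnergyFamily Ω ε₀ u)
    (lam : ℝ → ℝ)
    (hlam : ∀ ε ∈ Set.Ioo (0 : ℝ) ε₀, 0 < lam ε ∧
      lam ε ^ (2 * ((n : ℝ) - 2) / (4 - ((n : ℝ) - 2) * ε)) = supN Ω (u ε)) :
    Tendsto lam (𝓝[>] (0 : ℝ)) atTop := by
  have hn' : (3 : ℝ) ≤ n := by exact_mod_cast hn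
  have hsmall : ∀ᶠ ε in 𝓝[>] 0, ε ∈ Set.Ioo 0 ε₀ := Ioo_mem_nhdsGT hε₀
  have hexp : Tendsto (fun ε => 2 * ((n : ℝ) - 2) / (4 - ((n : ℝ) - 2) * ε)) (𝓝[>] 0)
      (𝓝 (2 * ((n : ℝ) - 2) / 4)) := by
    have : ContinuousAt (fun ε => 2 * ((n : ℝ) - 2) / (4 - ((n : ℝ) - 2) * ε)) 0 :=
      ContinuousAt.div (by fun_prop) (by fun_prop) (by norm_num)
    simpa only [mul_zero, sub_zero] using this.tendsto.mono_left nhdsWithin_le_nhds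
  refine tendsto_atTop_of_tendsto_rpow_atTop (by linarith) hexp
    (hsmall.mono fun ε hε => (hlam ε hε).1) ?_
  exact (hfam.tendsto_supN_atTop hn hΩo hΩb hΩne hε₀).congr'
    (hsmall.mono fun ε hε => (hlam ε hε).2.symm)

/-- the least energy solutions become unbounded: `λ_ε → ∞` as `ε → 0`. -/
theorem statement_8 {n : ℕ} (hn : n = 3 ∨ n = 4 ∨ n = 5)
    (Ω : Set (Eu n)) (hΩo : IsOpen Ω) (hΩb : IsBounded Ω) (hΩne : Ω.Nonempty)
    (ε₀ : ℝ) (hε₀ : 0 < ε₀) (u : ℝ → Eu n → ℝ)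
    (hfam : LeastEnergyFamily Ω ε₀ u)
    (lam : ℝ → ℝ)
    (hlam : ∀ ε ∈ Set.Ioo (0:ℝ) ε₀, 0 < lam ε ∧
      lam ε ^ (2 * ((n:ℝ) - 2) / (4 - ((n:ℝ) - 2) * ε)) = supN Ω (u ε)) :
    Tendsto lam (𝓝[>] (0:ℝ)) atTop :=
  statement_8_general (by omega) Ω hΩo hΩb hΩne ε₀ hε₀ u hfam lam hlam
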